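/- arXiv:1807.07802 — 3 statements merged into one kernel-verified Lean document; each statement's English description precedes it below -/
import Mathlib

section
/- Let G be an infinite finitely generated right-angled Coxeter group. Then G is slender if and only if there exist natural numbers n and k such that G ≅ (ℤ/2)ⁿ × (ℤ/2 ∗ ℤ/2)ᵏ, where ℤ/2 ∗ ℤ/2 denotes the free product of two copies of the cyclic group of order 2 (the infinite dihedral group). -/
def Group.Slender (G : Type*) [Group G] : Prop := ∀ H : Subgroup G, H.FG

def Group.FinitelyPresented (G : Type*) [Group G] : Prop :=
  ∃ (n : ℕ) (rels : Set (FreeGroup (Fin n))), rels.Finite ∧ Nonempty (PresentedGroup rels ≃* G)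

def Group.Coherent (G : Type*) [Group G] : Prop :=
  ∀ H : Subgroup G, H.FG → Group.FinitelyPresented H

/-- The Coxeter matrix of the right-angled Coxeter group of a simplicial graph `Γ`:
the label of every edge is `2`, and non-adjacent distinct vertices get the label `0`
(that is, `∞`: no relation). -/
def SimpleGraph.coxeterMatrix {V : Type*} (Γ : SimpleGraph V) [DecidableEq V]
    [DecidableRel Γ.Adj] : CoxeterMatrix V where
  M v w := if v = w then 1 else if Γ.Adj v w then 2 else 0
  isSymm := Matrix.IsSymm.ext fun a b => by
    rcases eq_or_ne a b with h | h
    · simp [h]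
    · simp [h, h.symm, Γ.adj_comm]
  diagonal v := by simp
  off_diagonal v w h := by simp only [if_neg h]; split <;> omega

/-- The right-angled Coxeter group
`C(Γ) = ⟨V ∣ v² = 1 for all v ∈ V, (vw)² = 1 for all {v,w} ∈ E⟩` of a simplicial graph `Γ`. -/
def SimpleGraph.racg {V : Type*} (Γ : SimpleGraph V) [DecidableEq V]
    [DecidableRel Γ.Adj] : Type _ :=
  Γ.coxeterMatrix.Group

instance {V : Type*} (Γ : SimpleGraph V) [DecidableEq V] [DecidableRel Γ.Adj] :
    Group Γ.racg :=
  inferInstanceAs (Group Γ.coxeterMatrix.Group)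

/-!
A slender group acting on a set has only finitely many points that are moved by elements of finite
support, because the elements of finite support generate a finitely generated subgroup. Letting the
right-angled Coxeter group of `Γ` act on `V × Bool` by the transpositions `(v, false) ↔ (v, true)`
shows that slenderness forces `V` to be finite. If some vertex `v` had two distinct non-neighbours
`u` and `w`, then `v` and `u` could act on `ℤ` as reflections whose product is a translation and `w`
as a transposition, so that infinitely many integers would be moved by transpositions. Hence every
vertex has at most one non-neighbour: `Γ` is complete multipartite with parts of size one or two,
and its group is the product of the groups of the parts, which are `ℤ/2` and `ℤ/2 ∗ ℤ/2`.

Conversely, slenderness passes to extensions, and the infinite dihedral group is an extension of a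
finite group by a cyclic one.
-/

open MulAction (fixedBy stabilizer)
open Monoid (Coprod)

section Slender

variable {G Q : Type*} [Group G] [Group Q]

theorem fg_map {H : Subgroup G} (hH : H.FG) (f : G →* Q) : (H.map f).FG := by
  rw [Subgroup.fg_iff_submonoid_fg] at hH ⊢
  exact hH.map f

theorem fg_of_fg_map_of_fg_inf_ker (f : G →* Q) {H : Subgroup G} (hmap : (H.map f).FG)
    (hker : (H ⊓ f.ker).FG) : H.FG := by
  obtain ⟨S, hS⟩ := hmap
  have hlift : ∀ s ∈ S, ∃ t ∈ H, f t = s := fun s hs =>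
    Subgroup.mem_map.1 (hS ▸ Subgroup.subset_closure hs)
  choose! t htH hft using hlift
  have hclosure : Subgroup.closure (t '' S) ≤ H := by
    rw [Subgroup.closure_le]
    rintro _ ⟨s, hs, rfl⟩
    exact htH s hs
  have hmap_closure : (Subgroup.closure (t '' S)).map f = H.map f := by
    rw [MonoidHom.map_closure, Set.image_image, ← hS]
    congr 1
    exact (Set.image_congr hft).trans (Set.image_id' _)
  have hsup : Subgroup.closure (t '' S) ⊔ H ⊓ f.ker = H := by
    refine le_antisymm (sup_le hclosure inf_le_left) fun h hh => ?_
    obtain ⟨u, hu, huh⟩ : f h ∈ (Subgroup.closure (t '' S)).map f :=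
      hmap_closure ▸ Subgroup.mem_map_of_mem f hh
    have hker_mem : u⁻¹ * h ∈ f.ker := by
      rw [MonoidHom.mem_ker, map_mul, map_inv, huh, inv_mul_cancel]
    rw [← mul_inv_cancel_left u h]
    exact Subgroup.mul_mem_sup hu ⟨H.mul_mem (H.inv_mem (hclosure hu)) hh, hker_mem⟩
  rw [← hsup]
  exact Subgroup.FG.sup ((Subgroup.fg_iff _).2 ⟨_, rfl, S.finite_toSet.image t⟩) hker

theorem slender_of_finite [Finite G] : Group.Slender G :=
  fun H => (Group.fg_iff_subgroup_fg H).1 inferInstance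

theorem slender_of_isCyclic [IsCyclic G] : Group.Slender G := by
  intro H
  obtain ⟨g, rfl⟩ := (Subgroup.isCyclic_iff_exists_zpowers_eq_top H).1 inferInstance
  rw [Subgroup.zpowers_eq_closure]
  exact (Subgroup.fg_iff _).2 ⟨_, rfl, Set.finite_singleton g⟩

theorem slender_of_ker (f : G →* Q) (hker : Group.Slender f.ker) (hQ : Group.Slender Q) :
    Group.Slender G := by
  refine fun H => fg_of_fg_map_of_fg_inf_ker f (hQ _) ?_
  rw [← Subgroup.subgroupOf_map_subtype]
  exact fg_map (hker _) _

theorem slender_of_injective {f : G →* Q} (hf : Function.Injective f) (hQ : Group.Slender Q) :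
    Group.Slender G := by
  have : Subsingleton f.ker := (f.ker_eq_bot_iff.2 hf) ▸ inferInstance
  exact slender_of_ker f slender_of_finite hQ

theorem slender_prod (hG : Group.Slender G) (hQ : Group.Slender Q) : Group.Slender (G × Q) := by
  refine slender_of_ker (MonoidHom.fst G Q) ?_ hG
  refine slender_of_injective (f := (MonoidHom.snd G Q).comp (MonoidHom.fst G Q).ker.subtype) ?_ hQ
  rintro ⟨x, hx⟩ ⟨y, hy⟩ hxy
  exact Subtype.ext (Prod.ext (hx.trans hy.symm) hxy)

theorem slender_pi {ι : Type*} [Finite ι] {G : ι → Type*} [∀ i, Group (G i)]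
    (hG : ∀ i, Group.Slender (G i)) : Group.Slender (∀ i, G i) := by
  induction ι using Finite.induction_empty_option with
  | of_equiv e ih =>
    refine slender_of_injective
      (f := MonoidHom.pi fun i => Pi.evalMonoidHom G (e i)) ?_ (ih fun i => hG (e i))
    intro x y hxy
    funext i
    obtain ⟨j, rfl⟩ := e.surjective i
    exact congrFun hxy j
  | h_empty => exact slender_of_finite
  | h_option ih =>
    refine slender_of_injective (f := (Pi.evalMonoidHom G none).prod
      (MonoidHom.pi fun i => Pi.evalMonoidHom G (some i))) ?_
      (slender_prod (hG none) (ih fun i => hG (some i)))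
    intro x y hxy
    funext i
    cases i with
    | none => exact congrArg Prod.fst hxy
    | some i => exact congrFun (congrArg Prod.snd hxy) i

/-- The set of points that are moved by an element of `G` that moves only finitely many points. -/
def finitarySupport {α : Type*} (F : G →* Equiv.Perm α) : Set α :=
  {x | ∃ g, (fixedBy α (F g))ᶜ.Finite ∧ F g x ≠ x}

/-- The elements of `G` that move only finitely many points generate a finitely generated subgroup,
and a point moved by one of them is moved by one of finitely many generators. -/
theorem finite_finitarySupport_of_slender {α : Type*} (hG : Group.Slender G)
    (F : G →* Equiv.Perm α) : (finitarySupport F).Finite := by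
  let := MulAction.compHom α F
  obtain ⟨S, hS⟩ := hG (Subgroup.closure {g | (fixedBy α g)ᶜ.Finite})
  have hfin : ∀ s ∈ S, (fixedBy α s)ᶜ.Finite := fun s hs =>
    finite_compl_fixedBy_closure_iff.2 (fun _ hg => hg) s (hS ▸ Subgroup.subset_closure hs)
  refine (S.finite_toSet.biUnion hfin).subset ?_
  rintro x ⟨g, hg, hgx⟩
  by_contra hx
  have hstab : Subgroup.closure (S : Set G) ≤ stabilizer G x :=
    (Subgroup.closure_le _).2 fun s hs => not_not.1 fun hsx => hx (Set.mem_biUnion hs hsx)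
  exact hgx (hstab (hS ▸ Subgroup.subset_closure hg))

theorem mem_finitarySupport_of_apply_eq_swap {α : Type*} [DecidableEq α] {F : G →* Equiv.Perm α}
    {g : G} {x y : α} (hg : F g = Equiv.swap x y) (hxy : x ≠ y) : x ∈ finitarySupport F := by
  refine ⟨g, ?_, ?_⟩
  · rw [hg]
    exact finite_compl_fixedBy_swap
  · rw [hg, Equiv.swap_apply_left]
    exact hxy.symm

theorem apply_mem_finitarySupport {α : Type*} {F : G →* Equiv.Perm α} (h : G) {x : α}
    (hx : x ∈ finitarySupport F) : F h x ∈ finitarySupport F := by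
  obtain ⟨g, hg, hgx⟩ := hx
  refine ⟨h * g * h⁻¹, ?_, ?_⟩
  · rw [map_mul, map_mul, map_inv, ← MulAction.smul_fixedBy, ← Set.smul_set_compl]
    exact hg.smul_set
  · simpa using hgx

end Slender

section Involutions

variable {G : Type*} [Group G]

theorem normal_zpowers_mul_of_involutions {a b : G} (ha : a * a = 1) (hb : b * b = 1)
    (hab : Subgroup.closure {a, b} = ⊤) : (Subgroup.zpowers (a * b)).Normal := by
  have ha' : a⁻¹ = a := inv_eq_of_mul_eq_one_left ha
  have hb' : b⁻¹ = b := inv_eq_of_mul_eq_one_left hb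
  rw [← Subgroup.normalizer_eq_top_iff, eq_top_iff, ← hab, Subgroup.closure_le]
  rintro g hg
  have hconj : g * (a * b) * g⁻¹ = (a * b)⁻¹ := by
    rw [mul_inv_rev, ha', hb']
    rcases hg with rfl | rfl
    · rw [ha', ← mul_assoc, ha, one_mul]
    · rw [hb', mul_assoc, mul_assoc, hb, mul_one]
  rw [SetLike.mem_coe, Subgroup.mem_normalizer_iff_map_conj_eq, MonoidHom.map_zpowers,
    MonoidHom.coe_coe, MulAut.conj_apply, hconj, Subgroup.zpowers_inv]

theorem slender_of_involutions {a b : G} (ha : a * a = 1) (hb : b * b = 1)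
    (hab : Subgroup.closure {a, b} = ⊤) : Group.Slender G := by
  have := normal_zpowers_mul_of_involutions ha hb hab
  let π := QuotientGroup.mk' (Subgroup.zpowers (a * b))
  have hπ : π a = π b := by
    rw [QuotientGroup.mk'_eq_mk']
    exact ⟨a * b, Subgroup.mem_zpowers _, by rw [← mul_assoc, ha, one_mul]⟩
  have hgen : Subgroup.zpowers (π a) = ⊤ := by
    have hrange : π.range = ⊤ := MonoidHom.range_eq_top.2 (QuotientGroup.mk'_surjective _)
    rwa [MonoidHom.range_eq_map, ← hab, MonoidHom.map_closure, Set.image_pair, ← hπ,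
      Set.pair_eq_singleton, ← Subgroup.zpowers_eq_closure] at hrange
  have hfin : Finite (G ⧸ Subgroup.zpowers (a * b)) := by
    have hord : IsOfFinOrder (π a) :=
      isOfFinOrder_iff_pow_eq_one.2 ⟨2, two_pos, by rw [pow_two, ← map_mul, ha, map_one]⟩
    have hzpowers : (Subgroup.zpowers (π a) : Set (G ⧸ Subgroup.zpowers (a * b))).Finite :=
      hord.finite_zpowers
    rwa [hgen, Subgroup.coe_top, Set.finite_univ_iff] at hzpowers
  refine slender_of_ker π ?_ slender_of_finite
  rw [QuotientGroup.ker_mk']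
  exact slender_of_isCyclic

/-- The homomorphism from the cyclic group of order two that sends the generator to `g`. -/
def involutionHom (g : G) (hg : g * g = 1) : Multiplicative (ZMod 2) →* G :=
  AddMonoidHom.toMultiplicativeLeft <| ZMod.lift 2
    ⟨zmultiplesHom (Additive G) (Additive.ofMul g), by
      rw [zmultiplesHom_apply, Nat.cast_ofNat, two_zsmul, ← ofMul_mul, hg, ofMul_one]⟩

theorem involutionHom_ofAdd_one (g : G) (hg : g * g = 1) :
    involutionHom g hg (Multiplicative.ofAdd 1) = g := by
  have h : ((1 : ℤ) : ZMod 2) = 1 := Int.cast_one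
  rw [involutionHom, AddMonoidHom.coe_toMultiplicativeLeft, Function.comp_apply,
    Function.comp_apply, toAdd_ofAdd, ← h, ZMod.lift_coe, zmultiplesHom_apply, one_zsmul,
    toMul_ofMul]

theorem ofAdd_one_mul_self : (Multiplicative.ofAdd 1 : Multiplicative (ZMod 2)) *
    Multiplicative.ofAdd 1 = 1 := by
  decide

theorem eq_one_or_eq_ofAdd_one :
    ∀ x : Multiplicative (ZMod 2), x = 1 ∨ x = Multiplicative.ofAdd 1 := by
  decide

theorem zmodTwo_hom_ext {f g : Multiplicative (ZMod 2) →* G}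
    (h : f (Multiplicative.ofAdd 1) = g (Multiplicative.ofAdd 1)) : f = g := by
  refine MonoidHom.ext fun x => ?_
  obtain rfl | rfl := eq_one_or_eq_ofAdd_one x
  · rw [map_one, map_one]
  · exact h

theorem range_zmodTwo_hom (f : Multiplicative (ZMod 2) →* G) :
    f.range = Subgroup.zpowers (f (Multiplicative.ofAdd 1)) := by
  have hgen : Subgroup.zpowers (Multiplicative.ofAdd (1 : ZMod 2)) = ⊤ := by
    refine (Subgroup.eq_top_iff' _).2 fun x => ?_
    obtain rfl | rfl := eq_one_or_eq_ofAdd_one x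
    · exact one_mem _
    · exact Subgroup.mem_zpowers _
  rw [MonoidHom.range_eq_map, ← hgen, MonoidHom.map_zpowers]

theorem slender_coprod_zmodTwo :
    Group.Slender (Coprod (Multiplicative (ZMod 2)) (Multiplicative (ZMod 2))) := by
  refine slender_of_involutions (a := Coprod.inl (Multiplicative.ofAdd 1))
    (b := Coprod.inr (Multiplicative.ofAdd 1)) ?_ ?_ ?_
  · rw [← map_mul, ofAdd_one_mul_self, map_one]
  · rw [← map_mul, ofAdd_one_mul_self, map_one]
  · rw [← Coprod.range_inl_sup_range_inr, range_zmodTwo_hom, range_zmodTwo_hom,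
      Subgroup.zpowers_eq_closure, Subgroup.zpowers_eq_closure, ← Subgroup.closure_union,
      Set.singleton_union]

end Involutions

theorem exists_pi_mulEquiv_prod {ι A B : Type*} [Finite ι] {G : ι → Type*} [∀ i, MulOneClass (G i)]
    [MulOneClass A] [MulOneClass B] (h : ∀ i, Nonempty (G i ≃* A) ∨ Nonempty (G i ≃* B)) :
    ∃ n k : ℕ, Nonempty ((∀ i, G i) ≃* (Fin n → A) × (Fin k → B)) := by
  classical
  let p i := Nonempty (G i ≃* A)
  let split : (∀ i, G i) ≃* (∀ i : {i // p i}, G i) × (∀ i : {i // ¬ p i}, G i) :=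
    { Equiv.piEquivPiSubtypeProd p G with map_mul' := fun _ _ => rfl }
  let eA : (∀ i : {i // p i}, G i) ≃* (Fin (Nat.card {i // p i}) → A) :=
    (MulEquiv.piCongrRight fun i : {i // p i} => i.2.some).trans
      (MulEquiv.arrowCongr (Finite.equivFin _) (MulEquiv.refl A))
  let eB : (∀ i : {i // ¬ p i}, G i) ≃* (Fin (Nat.card {i // ¬ p i}) → B) :=
    (MulEquiv.piCongrRight fun i : {i // ¬ p i} => ((h i).resolve_left i.2).some).trans
      (MulEquiv.arrowCongr (Finite.equivFin _) (MulEquiv.refl B))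
  exact ⟨_, _, ⟨split.trans (MulEquiv.prodCongr eA eB)⟩⟩

namespace Racg

variable {V : Type*} [DecidableEq V] (Γ : SimpleGraph V) [DecidableRel Γ.Adj]

/-- The standard generator of the right-angled Coxeter group of `Γ` at the vertex `v`. -/
def simple (v : V) : Γ.racg := Γ.coxeterMatrix.simple v

theorem simple_mul_self (v : V) : simple Γ v * simple Γ v = 1 :=
  Γ.coxeterMatrix.toCoxeterSystem.simple_mul_simple_self v

variable {Γ}

theorem commute_simple {v w : V} (h : Γ.Adj v w) : Commute (simple Γ v) (simple Γ w) := by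
  have hpow : (simple Γ v * simple Γ w) ^ (if v = w then 1 else if Γ.Adj v w then 2 else 0) = 1 :=
    Γ.coxeterMatrix.toCoxeterSystem.simple_mul_simple_pow v w
  rw [if_neg h.ne, if_pos h, pow_two] at hpow
  have hinv (u : V) : (simple Γ u)⁻¹ = simple Γ u :=
    inv_eq_of_mul_eq_one_left (simple_mul_self Γ u)
  rw [Commute, SemiconjBy, eq_inv_of_mul_eq_one_left hpow, mul_inv_rev, hinv, hinv]

variable {H : Type*} [Group H]

/-- The universal property of the right-angled Coxeter group of `Γ`: a family of elements that
square to `1` and commute along the edges of `Γ` extends to a homomorphism. -/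
def lift (f : V → H) (hsq : ∀ v, f v * f v = 1) (hcomm : ∀ v w, Γ.Adj v w → Commute (f v) (f w)) :
    Γ.racg →* H :=
  Γ.coxeterMatrix.toCoxeterSystem.lift ⟨f, fun v w => by
    change (f v * f w) ^ (if v = w then 1 else if Γ.Adj v w then 2 else 0) = 1
    split_ifs with hvw hadj
    · rw [pow_one, hvw, hsq]
    · rw [(hcomm v w hadj).mul_pow, pow_two, pow_two, hsq, hsq, one_mul]
    · rw [pow_zero]⟩

@[simp]
theorem lift_simple (f : V → H) (hsq : ∀ v, f v * f v = 1)
    (hcomm : ∀ v w, Γ.Adj v w → Commute (f v) (f w)) (v : V) :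
    lift f hsq hcomm (simple Γ v) = f v :=
  Γ.coxeterMatrix.toCoxeterSystem.lift_apply_simple _ v

theorem hom_ext {f g : Γ.racg →* H} (h : ∀ v, f (simple Γ v) = g (simple Γ v)) : f = g :=
  Γ.coxeterMatrix.toCoxeterSystem.ext_simple h

theorem simple_induction {p : Γ.racg → Prop} (hsimple : ∀ v, p (simple Γ v)) (hone : p 1)
    (hmul : ∀ x y, p x → p y → p (x * y)) (x : Γ.racg) : p x :=
  Γ.coxeterMatrix.toCoxeterSystem.simple_induction x hsimple hone hmul

theorem commute_map_map {W : Type*} [DecidableEq W] {Δ : SimpleGraph W} [DecidableRel Δ.Adj]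
    {f : Γ.racg →* H} {g : Δ.racg →* H}
    (h : ∀ v w, Commute (f (simple Γ v)) (g (simple Δ w))) (x : Γ.racg) (y : Δ.racg) :
    Commute (f x) (g y) := by
  induction x using simple_induction with
  | hsimple v =>
    induction y using simple_induction with
    | hsimple w => exact h v w
    | hone => rw [map_one]; exact Commute.one_right _
    | hmul y₁ y₂ h₁ h₂ => rw [map_mul]; exact h₁.mul_right h₂
  | hone => rw [map_one]; exact Commute.one_left _
  | hmul x₁ x₂ h₁ h₂ => rw [map_mul]; exact h₁.mul_left h₂

/-- An isomorphism of graphs induces an isomorphism of their right-angled Coxeter groups. -/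
def congr {W : Type*} [DecidableEq W] {Δ : SimpleGraph W} [DecidableRel Δ.Adj] (e : Γ ≃g Δ) :
    Γ.racg ≃* Δ.racg :=
  MonoidHom.toMulEquiv
    (lift (fun v => simple Δ (e v)) (fun _ => simple_mul_self Δ _)
      fun _ _ hadj => commute_simple (e.map_adj_iff.2 hadj))
    (lift (fun w => simple Γ (e.symm w)) (fun _ => simple_mul_self Γ _)
      fun _ _ hadj => commute_simple (e.symm.map_adj_iff.2 hadj))
    (hom_ext fun v => by simp)
    (hom_ext fun w => by simp)

section Decomposition

open SimpleGraph (completeMultipartiteGraph)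

variable {ι : Type*} (α : ι → Type*) [DecidableEq ι] [∀ i, DecidableEq (α i)]

/-- The homomorphism induced by the inclusion of the independent set `α i` into the complete
multipartite graph with parts `α`. -/
def partHom (i : ι) : (⊥ : SimpleGraph (α i)).racg →* (completeMultipartiteGraph α).racg :=
  lift (fun v => simple _ ⟨i, v⟩) (fun _ => simple_mul_self _ _) fun _ _ h => h.elim

theorem partHom_simple (i : ι) (v : α i) : partHom α i (simple ⊥ v) = simple _ ⟨i, v⟩ :=
  lift_simple _ _ _ v

theorem pairwise_commute_partHom :
    Pairwise fun i j => ∀ x y, Commute (partHom α i x) (partHom α j y) := by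
  refine fun i j hij => commute_map_map fun v w => ?_
  rw [partHom_simple, partHom_simple]
  exact commute_simple hij

/-- The homomorphism that maps the generators of each part of a complete multipartite graph to the
factor belonging to this part. -/
def toPi : (completeMultipartiteGraph α).racg →* ∀ i, (⊥ : SimpleGraph (α i)).racg :=
  lift (fun x => Pi.mulSingle x.1 (simple ⊥ x.2))
    (fun x => by rw [← Pi.mulSingle_mul, simple_mul_self, Pi.mulSingle_one])
    fun _ _ hne => Pi.mulSingle_commute hne _ _

theorem toPi_simple (x : Σ i, α i) : toPi α (simple _ x) = Pi.mulSingle x.1 (simple ⊥ x.2) :=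
  lift_simple _ _ _ x

theorem toPi_comp_partHom (i : ι) :
    (toPi α).comp (partHom α i) = MonoidHom.mulSingle (fun i => (⊥ : SimpleGraph (α i)).racg) i :=
  hom_ext fun v => by rw [MonoidHom.comp_apply, partHom_simple, toPi_simple]; rfl

/-- The right-angled Coxeter group of a complete multipartite graph is the product of the
right-angled Coxeter groups of its parts. -/
def completeMultipartiteMulEquivPi [Fintype ι] :
    (completeMultipartiteGraph α).racg ≃* ∀ i, (⊥ : SimpleGraph (α i)).racg :=
  MonoidHom.toMulEquiv (toPi α)
    (MonoidHom.noncommPiCoprod (partHom α) (pairwise_commute_partHom α))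
    (hom_ext fun x => by
      rw [MonoidHom.comp_apply, toPi_simple, MonoidHom.noncommPiCoprod_mulSingle, partHom_simple,
        MonoidHom.id_apply])
    (MonoidHom.pi_ext fun i x => by
      rw [MonoidHom.comp_apply, MonoidHom.noncommPiCoprod_mulSingle, ← MonoidHom.comp_apply,
        toPi_comp_partHom, MonoidHom.mulSingle_apply, MonoidHom.id_apply])

/-- The right-angled Coxeter group of a single vertex. -/
def botUniqueMulEquiv (V : Type*) [DecidableEq V] [Unique V] :
    (⊥ : SimpleGraph V).racg ≃* Multiplicative (ZMod 2) :=
  MonoidHom.toMulEquiv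
    (lift (fun _ => Multiplicative.ofAdd 1) (fun _ => ofAdd_one_mul_self) fun _ _ h => h.elim)
    (involutionHom (simple ⊥ default) (simple_mul_self _ _))
    (hom_ext fun v => by simp [involutionHom_ofAdd_one, Unique.eq_default v])
    (zmodTwo_hom_ext (by simp [involutionHom_ofAdd_one]))

/-- The right-angled Coxeter group of two isolated vertices. -/
def botBoolMulEquiv :
    (⊥ : SimpleGraph Bool).racg ≃*
      Coprod (Multiplicative (ZMod 2)) (Multiplicative (ZMod 2)) :=
  MonoidHom.toMulEquiv
    (lift (fun b => bif b then Coprod.inr (Multiplicative.ofAdd 1)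
      else Coprod.inl (Multiplicative.ofAdd 1))
      (fun b => by cases b <;> simp only [cond, ← map_mul, ofAdd_one_mul_self, map_one])
      fun _ _ h => h.elim)
    (Coprod.lift (involutionHom (simple ⊥ false) (simple_mul_self _ _))
      (involutionHom (simple ⊥ true) (simple_mul_self _ _)))
    (hom_ext fun b => by cases b <;> simp [involutionHom_ofAdd_one])
    (Coprod.hom_ext (zmodTwo_hom_ext (by simp [involutionHom_ofAdd_one]))
      (zmodTwo_hom_ext (by simp [involutionHom_ofAdd_one])))

end Decomposition

section Obstructions

theorem finite_vertices_of_slender (hΓ : Group.Slender Γ.racg) : Finite V := by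
  let F : Γ.racg →* Equiv.Perm (V × Bool) :=
    lift (fun v => Equiv.swap (v, false) (v, true)) (fun _ => Equiv.swap_mul_self _ _)
      fun v w hvw => (Equiv.Perm.disjoint_swap_swap (by simp [hvw.ne])).commute
  refine Set.finite_univ_iff.1
    (((finite_finitarySupport_of_slender hΓ F).image Prod.fst).subset fun v _ => ?_)
  exact ⟨(v, false), mem_finitarySupport_of_apply_eq_swap (lift_simple _ _ _ v) (by simp), rfl⟩

/-- The homomorphism kills all generators other than `v`, `u` and `w`. -/
theorem exists_hom_of_not_adj {v u w : V} (hvu : Γᶜ.Adj v u) (hvw : Γᶜ.Adj v w)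
    (huw : u ≠ w) {a b c : H} (ha : a * a = 1) (hb : b * b = 1) (hc : c * c = 1)
    (hbc : Commute b c) :
    ∃ F : Γ.racg →* H, F (simple Γ v) = a ∧ F (simple Γ u) = b ∧ F (simple Γ w) = c := by
  let g (x : V) : H := if x = u then b else if x = w then c else 1
  let f (x : V) : H := if x = v then a else g x
  have hfv : f v = a := if_pos rfl
  have hfu : f u = b := by simp [f, g, hvu.ne']
  have hfw : f w = c := by simp [f, g, hvw.ne', huw.symm]
  have hsq (x : V) : f x * f x = 1 := by
    dsimp only [f, g]
    split_ifs <;> simp [ha, hb, hc]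
  have hcomm_g (x y : V) : Commute (g x) (g y) := by
    dsimp only [g]
    split_ifs <;> simp [hbc, hbc.symm]
  have hf_of_adj (y : V) (hy : Γ.Adj v y) : f y = 1 := by
    have hyu : y ≠ u := fun h => hvu.2 (h ▸ hy)
    have hyw : y ≠ w := fun h => hvw.2 (h ▸ hy)
    simp [f, g, hy.ne', hyu, hyw]
  have hcomm (x y : V) (hxy : Γ.Adj x y) : Commute (f x) (f y) := by
    by_cases hx : x = v
    · rw [hf_of_adj y (hx ▸ hxy)]
      exact Commute.one_right _
    by_cases hy : y = v
    · rw [hf_of_adj x (hy ▸ hxy.symm)]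
      exact Commute.one_left _
    · simp only [f, if_neg hx, if_neg hy, hcomm_g x y]
  exact ⟨lift f hsq hcomm, by rw [lift_simple, hfv], by rw [lift_simple, hfu],
    by rw [lift_simple, hfw]⟩

theorem commute_neg_swap_one_neg_one : Commute (Equiv.neg ℤ) (Equiv.swap 1 (-1)) := by
  have h : Equiv.swap (1 : ℤ) (-1) = Equiv.neg ℤ * Equiv.swap 1 (-1) * (Equiv.neg ℤ)⁻¹ := by
    rw [← Equiv.swap_apply_apply, Equiv.neg_apply, neg_neg, Equiv.swap_comm]
  exact mul_inv_eq_iff_eq_mul.1 h.symm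

/-- If `v` and `u` act on `ℤ` as `x ↦ 1 - x` and `x ↦ -x`, then `v * u` acts as the translation by
one. Let `w` act as a transposition that commutes with `x ↦ -x`; its conjugates by powers of `v * u`
are transpositions that move infinitely many points. -/
theorem eq_of_not_adj_of_slender (hΓ : Group.Slender Γ.racg) {v u w : V}
    (hvu : Γᶜ.Adj v u) (hvw : Γᶜ.Adj v w) : u = w := by
  by_contra huw
  obtain ⟨F, hv, hu, hw⟩ := exists_hom_of_not_adj hvu hvw huw (H := Equiv.Perm ℤ)
    (a := Equiv.subLeft 1) (by ext; simp) (by ext; simp) (Equiv.swap_mul_self _ _)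
    commute_neg_swap_one_neg_one
  have htranslation (x : ℤ) : F (simple Γ v * simple Γ u) x = x + 1 := by
    rw [map_mul, hv, hu, Equiv.Perm.mul_apply, Equiv.neg_apply, Equiv.subLeft_apply, sub_neg_eq_add,
      add_comm]
  have hone : (1 : ℤ) ∈ finitarySupport F := mem_finitarySupport_of_apply_eq_swap hw (by decide)
  obtain ⟨m, hm, hmax⟩ := (finite_finitarySupport_of_slender hΓ F).exists_maximal ⟨1, hone⟩
  have hsucc : m + 1 ∈ finitarySupport F :=
    htranslation m ▸ apply_mem_finitarySupport (simple Γ v * simple Γ u) hm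
  linarith [hmax hsucc (by linarith)]

end Obstructions

section Classification

theorem isCompleteMultipartite_of_slender (hΓ : Group.Slender Γ.racg) :
    Γ.IsCompleteMultipartite where
  trans a b c hab hbc := by
    intro hac
    have hab' : a ≠ b := by rintro rfl; exact hbc hac
    have hbc' : b ≠ c := by rintro rfl; exact hab hac
    exact hac.ne (eq_of_not_adj_of_slender (v := b) hΓ ⟨hab'.symm, fun h => hab h.symm⟩ ⟨hbc', hbc⟩)

theorem ncard_setOf_not_adj_of_slender (hΓ : Group.Slender Γ.racg) (v : V) :
    {x | ¬ Γ.Adj v x}.ncard = 1 ∨ {x | ¬ Γ.Adj v x}.ncard = 2 := by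
  by_cases hv : ∃ u, Γᶜ.Adj v u
  · obtain ⟨u, hvu⟩ := hv
    have hpair : {x | ¬ Γ.Adj v x} = {v, u} := by
      refine Set.Subset.antisymm (fun x hx => ?_) (Set.pair_subset Γ.irrefl hvu.2)
      exact (eq_or_ne x v).imp_right fun hxv => eq_of_not_adj_of_slender hΓ ⟨hxv.symm, hx⟩ hvu
    exact Or.inr (hpair ▸ Set.ncard_pair hvu.1)
  · have hsingleton : {x | ¬ Γ.Adj v x} = {v} := by
      refine Set.Subset.antisymm (fun x hx => ?_) (Set.singleton_subset_iff.2 Γ.irrefl)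
      exact of_not_not fun hxv => hv ⟨x, Ne.symm hxv, hx⟩
    exact Or.inl (hsingleton ▸ Set.ncard_singleton v)

theorem nonempty_bot_mulEquiv_of_card {W : Type*} [DecidableEq W]
    (hW : Nat.card W = 1 ∨ Nat.card W = 2) :
    Nonempty ((⊥ : SimpleGraph W).racg ≃* Multiplicative (ZMod 2)) ∨
      Nonempty ((⊥ : SimpleGraph W).racg ≃*
        Coprod (Multiplicative (ZMod 2)) (Multiplicative (ZMod 2))) := by
  refine hW.imp (fun h => ?_) fun h => ?_
  · obtain ⟨_⟩ := unique_iff_subsingleton_and_nonempty W |>.2 (Nat.card_eq_one_iff_unique.1 h)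
    exact ⟨botUniqueMulEquiv W⟩
  · have : Finite W := Nat.finite_of_card_ne_zero (by rw [h]; exact two_ne_zero)
    let e : W ≃ Bool := (Finite.equivFinOfCardEq h).trans finTwoEquiv
    exact ⟨(congr (Δ := ⊥) ⟨e, Iff.rfl⟩).trans botBoolMulEquiv⟩

theorem exists_mulEquiv_of_slender (hΓ : Group.Slender Γ.racg) :
    ∃ n k : ℕ, Nonempty (Γ.racg ≃*
      (Fin n → Multiplicative (ZMod 2)) ×
      (Fin k → Coprod (Multiplicative (ZMod 2)) (Multiplicative (ZMod 2)))) := by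
  classical
  have := finite_vertices_of_slender hΓ
  have hmulti := isCompleteMultipartite_of_slender hΓ
  have := Fintype.ofFinite (Quotient hmulti.setoid)
  let e := (congr hmulti.iso).trans (completeMultipartiteMulEquivPi _)
  obtain ⟨n, k, ⟨e'⟩⟩ := exists_pi_mulEquiv_prod fun c : Quotient hmulti.setoid =>
    nonempty_bot_mulEquiv_of_card (W := {x // hmulti.setoid.r c.out x})
      (ncard_setOf_not_adj_of_slender hΓ c.out)
  exact ⟨n, k, ⟨e.trans e'⟩⟩

end Classification

end Racg

theorem racg_slender_iff_general {V : Type*} [DecidableEq V] (Γ : SimpleGraph V)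
    [DecidableRel Γ.Adj] :
    Group.Slender Γ.racg ↔
      ∃ n k : ℕ, Nonempty (Γ.racg ≃*
        (Fin n → Multiplicative (ZMod 2)) ×
        (Fin k → Coprod (Multiplicative (ZMod 2)) (Multiplicative (ZMod 2)))) := by
  refine ⟨Racg.exists_mulEquiv_of_slender, fun ⟨n, k, ⟨e⟩⟩ => ?_⟩
  exact slender_of_injective (f := e.toMonoidHom) e.injective
    (slender_prod slender_of_finite (slender_pi fun _ => slender_coprod_zmodTwo))

/-- An infinite finitely generated right-angled Coxeter group `G = C(Γ)` is
slender if and only if `G ≅ (ℤ/2)ⁿ × (ℤ/2 ∗ ℤ/2)ᵏ` for some natural numbers `n` and `k`. -/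
theorem racg_slender_iff
    {V : Type} [Fintype V] [DecidableEq V] (Γ : SimpleGraph V) [DecidableRel Γ.Adj]
    (hinf : Infinite Γ.racg) :
    Group.Slender Γ.racg ↔
      ∃ n k : ℕ, Nonempty (Γ.racg ≃*
        (Fin n → Multiplicative (ZMod 2)) ×
        (Fin k → Monoid.Coprod (Multiplicative (ZMod 2)) (Multiplicative (ZMod 2)))) :=
  racg_slender_iff_general Γ
end

section
/- Every slender finitely generated Coxeter group is coherent. -/
def SimpleGraph.NoInducedCycleGT3 {V : Type*} (Γ : SimpleGraph V) : Prop :=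
  ∀ n : ℕ, 4 ≤ n → IsEmpty (SimpleGraph.cycleGraph n ↪g Γ)

/-- The restriction of a Coxeter matrix to a set of indices
(corresponding to an induced subgraph of the Coxeter graph). -/
def CoxeterMatrix.restrict {V : Type*} (M : CoxeterMatrix V) (S : Set V) : CoxeterMatrix S where
  M a b := M a b
  isSymm := Matrix.IsSymm.ext fun a b => M.isSymm.apply a b
  diagonal a := M.diagonal a
  off_diagonal a b h := M.off_diagonal a b (fun hc => h (Subtype.ext hc))

/-- `M` is the Coxeter matrix associated to the simplicial graph `Γ` with edge labeling
`ψ : E → {2,3,4,...}` (recorded by the values of `M` on adjacent pairs): non-adjacent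
distinct vertices get the label `0` (that is, `∞`: no relation). -/
def CoxeterMatrix.IsMatrixOf {V : Type*} (M : CoxeterMatrix V) (Γ : SimpleGraph V) : Prop :=
  (∀ v w, Γ.Adj v w → 2 ≤ M v w) ∧ (∀ v w, v ≠ w → ¬Γ.Adj v w → M v w = 0)

/-!
Let `W` be the Coxeter group. It acts faithfully on its roots, and each element changes the sign
of only finitely many of them. Write `B` for the Tits form and `t` for the reflection along a
simple root `a`.

The congruence kernels modulo `2` and `3` of an integral form of the geometric representation give
a normal subgroup `K` of finite index that is torsion-free. For `g ∈ K` we have `|B(a, g a)| ≥ 1`,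
since otherwise `t * g t g⁻¹`, which lies in `K`, is a rotation of finite order in a dihedral group.

Three roots with pairwise products `B ≤ -1` give an infinite family of such roots, and by
ping-pong the reflections along them generate a free product of infinitely many groups of order
two, which is not finitely generated. As `W` is slender, there are no three such roots, and
therefore the sign of `B(a, g a)` is multiplicative in `g ∈ K`.

Let `K⁺` be the common kernel of these characters, over all simple roots `a`, and let `P` be the
set of positive roots in the `K⁺`-orbit of `a`. Then `g ↦ #(P \ g⁻¹ P) - #(g⁻¹ P \ P)` is a
homomorphism `K⁺ → ℤ`. No element of `W` makes two positive roots with `B ≤ -1` both negative, so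
if `g a` is negative, then `g` moves no root into `P` and the value at `g` is positive. Hence an
element of the kernels of all these homomorphisms fixes the sign of every simple root and is
trivial. So `W` has a subgroup of finite index that embeds in `ℤⁿ`, and finite presentability of
all subgroups follows.
-/

section FinitePresentation

open SemidirectProduct

lemma finitelyPresented_of_isFinitelyPresented {G : Type*} [Group G]
    (h : Group.IsFinitelyPresented G) : Group.FinitelyPresented G := by
  obtain ⟨n, rels, hrels, ⟨e⟩⟩ := h.exists_mulEquiv_presentedGroup
  exact ⟨n, rels, hrels, ⟨e.symm⟩⟩

lemma exists_finite_closure_eq_top {G : Type*} [Group G] (h : Group.IsFinitelyPresented G) :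
    ∃ S : Set G, Subgroup.closure S = ⊤ ∧ S.Finite := by
  obtain ⟨n, f, hf, -⟩ := h.out
  exact Group.fg_iff.mp (Group.fg_of_surjective hf)

lemma map_conj_of_closure_eq_top {N H P : Type*} [Group N] [Group H] [Group P]
    (θ : H →* MulAut N) (f : N →* P) (g : H →* P) {S : Set N} {T : Set H}
    (hS : Subgroup.closure S = ⊤) (hT : Subgroup.closure T = ⊤)
    (h : ∀ t ∈ T, ∀ s ∈ S, f (θ t s) = g t * f s * (g t)⁻¹) (y : H) (x : N) :
    f (θ y x) = g y * f x * (g y)⁻¹ := by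
  have hgen (t : H) (ht : t ∈ T) :
      f.comp (θ t).toMonoidHom = (MulAut.conj (g t)).toMonoidHom.comp f :=
    MonoidHom.eq_of_eqOn_dense hS (h t ht)
  induction hT.symm ▸ Subgroup.mem_top y using Subgroup.closure_induction generalizing x with
  | mem t ht => exact DFunLike.congr_fun (hgen t ht) x
  | one => simp
  | mul y z _ _ hy hz => simp only [map_mul, MulAut.mul_apply, hy, hz, mul_inv_rev, mul_assoc]
  | inv y _ hy =>
    have := hy ((θ y)⁻¹ x)
    rw [MulAut.apply_inv_self] at this
    simp only [map_inv, this]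
    group

theorem isFinitelyPresented_semidirectProduct {N H : Type*} [Group N] [Group H]
    (θ : H →* MulAut N) (hN : Group.IsFinitelyPresented N) (hH : Group.IsFinitelyPresented H) :
    Group.IsFinitelyPresented (N ⋊[θ] H) := by
  obtain ⟨S, hS, hSfin⟩ := exists_finite_closure_eq_top hN
  obtain ⟨T, hT, hTfin⟩ := exists_finite_closure_eq_top hH
  let f : Monoid.Coprod N H →* N ⋊[θ] H := Monoid.Coprod.lift inl inr
  let rel (p : H × N) : Monoid.Coprod N H :=
    .inl (θ p.1 p.2) / (.inr p.1 * .inl p.2 * (.inr p.1)⁻¹)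
  have hrel (p : H × N) : f (rel p) = 1 := by simp [f, rel, inl_aut]
  have hf : Function.Surjective f := fun x ↦
    ⟨.inl x.left * .inr x.right, by simp [f, inl_left_mul_inr_right]⟩
  refine .of_surjective f hf ⟨rel '' (T ×ˢ S), (hTfin.prod hSfin).image _, le_antisymm ?_ ?_⟩
  · refine Subgroup.normalClosure_le_normal ?_
    rintro _ ⟨p, -, rfl⟩
    exact hrel p
  · let q := QuotientGroup.mk' (Subgroup.normalClosure (rel '' (T ×ˢ S)))
    have hq (y : H) (x : N) :
        q (.inl (θ y x)) = q (.inr y) * q (.inl x) * (q (.inr y))⁻¹ := by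
      refine map_conj_of_closure_eq_top θ (q.comp Monoid.Coprod.inl) (q.comp Monoid.Coprod.inr)
        hS hT (fun t ht s hs ↦ ?_) y x
      have : q (rel (t, s)) = 1 := (QuotientGroup.eq_one_iff _).mpr
        (Subgroup.subset_normalClosure ⟨(t, s), ⟨ht, hs⟩, rfl⟩)
      simpa [rel, div_eq_one] using this
    let g : N ⋊[θ] H →* _ := lift (q.comp Monoid.Coprod.inl) (q.comp Monoid.Coprod.inr)
      fun y ↦ MonoidHom.ext (hq y)
    have hg : g.comp f = q := by
      ext <;> simp [g, f]
    intro x hx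
    rw [← QuotientGroup.eq_one_iff]
    change q x = 1
    rw [← hg, MonoidHom.comp_apply, (MonoidHom.mem_ker).mp hx, map_one]

lemma isFinitelyNormallyGenerated_of_disjoint_ker {G H : Type*} [Group G] [Group H] {π : G →* H}
    (hπ : Function.Surjective π) {K : Subgroup G} [K.Normal] (hdisj : Disjoint K π.ker)
    (hK : (K.map π).IsFinitelyNormallyGenerated) : K.IsFinitelyNormallyGenerated := by
  obtain ⟨R, hRfin, hR⟩ := hK
  have hRK : R ⊆ π '' K := by
    rw [← Subgroup.coe_map, ← hR]
    exact Subgroup.subset_normalClosure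
  obtain ⟨S, hSK, hSfin, rfl⟩ := (Set.exists_subset_image_finite_and (p := (· = R))).mp
    ⟨R, hRK, hRfin, rfl⟩
  have hSK' : Subgroup.normalClosure S ≤ K := Subgroup.normalClosure_le_normal hSK
  refine ⟨S, hSfin, hSK'.antisymm fun x hx ↦ ?_⟩
  rw [← Subgroup.map_normalClosure S π hπ] at hR
  obtain ⟨y, hy, hyx⟩ := hR ▸ Subgroup.mem_map_of_mem π hx
  have hxy : y⁻¹ * x = 1 := Subgroup.disjoint_def.mp hdisj (K.mul_mem (K.inv_mem (hSK' hy)) hx)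
    (by simp [MonoidHom.mem_ker, hyx])
  rwa [← inv_mul_eq_one.mp hxy]

theorem isFinitelyPresented_of_ker {G Q : Type*} [Group G] [Group Q] {φ : G →* Q}
    (hφ : Function.Surjective φ) (hker : Group.IsFinitelyPresented φ.ker)
    (hQ : Group.IsFinitelyPresented Q) : Group.IsFinitelyPresented G := by
  obtain ⟨n, g, hg, hgker⟩ := hQ.out
  let γ : FreeGroup (Fin n) →* G := FreeGroup.lift fun j ↦ Function.surjInv hφ (g (.of j))
  have hγ (y : FreeGroup (Fin n)) : φ (γ y) = g y := by
    have : φ.comp γ = g := by ext j; simp [γ, Function.surjInv_eq]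
    exact DFunLike.congr_fun this y
  let θ : FreeGroup (Fin n) →* MulAut φ.ker := MulAut.conjNormal.comp γ
  let f : φ.ker ⋊[θ] FreeGroup (Fin n) →* G := lift φ.ker.subtype γ fun y ↦ by ext; simp [θ]
  have hf (x : φ.ker) (y : FreeGroup (Fin n)) : f (inl x * inr y) = x * γ y := by simp [f]
  have := isFinitelyPresented_semidirectProduct θ hker inferInstance
  refine .of_surjective f (fun x ↦ ?_)
    (isFinitelyNormallyGenerated_of_disjoint_ker rightHom_surjective ?_ ?_)
  · obtain ⟨y, hy⟩ := hg (φ x)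
    exact ⟨inl ⟨x * (γ y)⁻¹, by simp [hγ, hy]⟩ * inr y, by simp [hf]⟩
  · rw [Subgroup.disjoint_def, ← range_inl_eq_ker_rightHom]
    rintro _ hx ⟨x, rfl⟩
    obtain rfl : x = 1 := by simpa [f] using hx
    exact map_one inl
  · convert hgker
    refine le_antisymm ?_ fun y hy ↦ ?_
    · rintro _ ⟨x, hx, rfl⟩
      have : φ (f (inl x.left * inr x.right)) = 1 := by
        rw [inl_left_mul_inr_right, (MonoidHom.mem_ker).mp hx, map_one]
      rw [hf, map_mul, x.left.2, one_mul, hγ] at this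
      exact this
    · exact ⟨inl ⟨(γ y)⁻¹, by simpa [hγ] using hy⟩ * inr y, by simp [hf], by simp⟩

end FinitePresentation

/-- Every subgroup of `G` is finitely presented. -/
def HereditarilyFinitelyPresented (G : Type*) [Group G] : Prop :=
  ∀ H : Subgroup G, Group.IsFinitelyPresented H

namespace HereditarilyFinitelyPresented

variable {G Q : Type*} [Group G] [Group Q]

lemma of_injective (φ : G →* Q) (hφ : Function.Injective φ)
    (h : HereditarilyFinitelyPresented Q) : HereditarilyFinitelyPresented G := fun H ↦
  have := h (H.map φ)
  .equiv (H.equivMapOfInjective φ hφ).symm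

lemma of_ker (φ : G →* Q) (hker : HereditarilyFinitelyPresented φ.ker)
    (hQ : HereditarilyFinitelyPresented Q) : HereditarilyFinitelyPresented G := fun H ↦ by
  let ψ : H →* Q := φ.comp H.subtype
  have hψ : Function.Injective (H.subtype.subgroupComap φ.ker) := fun x y hxy ↦
    Subtype.ext (Subtype.ext (congrArg (Subtype.val : φ.ker → G) hxy))
  refine isFinitelyPresented_of_ker ψ.rangeRestrict_surjective ?_ (hQ _)
  rw [MonoidHom.ker_rangeRestrict, ← MonoidHom.comap_ker]
  have := of_injective _ hψ hker ⊤
  exact .equiv (Subgroup.topEquiv (G := φ.ker.comap H.subtype))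

lemma of_finite [Finite G] : HereditarilyFinitelyPresented G := fun _ ↦ inferInstance

lemma multiplicative_int : HereditarilyFinitelyPresented (Multiplicative ℤ) := fun H ↦ by
  rcases finite_or_infinite H with h | h
  · infer_instance
  · exact .equiv (G := Multiplicative ℤ) (mulEquivOfCyclicCardEq (by simp))

lemma pi_fin (n : ℕ) (h : HereditarilyFinitelyPresented G) :
    HereditarilyFinitelyPresented (Fin n → G) := by
  induction n with
  | zero => exact of_finite
  | succ n ih =>
    refine of_ker (Pi.evalMonoidHom (fun _ ↦ G) 0) ?_ h
    let tail : (Pi.evalMonoidHom (fun _ : Fin (n + 1) ↦ G) 0).ker →* Fin n → G :=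
      { toFun x j := x.1 j.succ
        map_one' := rfl
        map_mul' _ _ := rfl }
    refine of_injective tail (fun x y hxy ↦ Subtype.ext (funext (Fin.cases ?_ (congrFun hxy)))) ih
    exact x.2.trans y.2.symm

lemma pi {ι : Type*} [Finite ι] (h : HereditarilyFinitelyPresented G) :
    HereditarilyFinitelyPresented (ι → G) := by
  obtain ⟨n, ⟨e⟩⟩ := Finite.exists_equiv_fin ι
  exact of_injective (MulEquiv.arrowCongr e (.refl G)).toMonoidHom (MulEquiv.injective _)
    (pi_fin n h)

end HereditarilyFinitelyPresented

section UnitReflection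

open Polynomial.Chebyshev Polynomial

section CommRing

variable {R E : Type*} [CommRing R] [AddCommGroup E] [Module R E]
  {B : LinearMap.BilinForm R E} {a b v w : E}

/-- The map `v ↦ v - 2 B(a, v) a`, which is the reflection along `a` when `B(a, a) = 1`. -/
def unitReflection (B : LinearMap.BilinForm R E) (a : E) : Module.End R E :=
  Module.preReflection a ((2 : R) • B a)

lemma unitReflection_apply (B : LinearMap.BilinForm R E) (a v : E) :
    unitReflection B a v = v - (2 * B a v) • a :=
  Module.preReflection_apply a _ v

lemma unitReflection_eq_self (h : B a v = 0) : unitReflection B a v = v := by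
  simp [unitReflection_apply, h]

lemma unitReflection_self (ha : B a a = 1) : unitReflection B a a = -a :=
  Module.preReflection_apply_self (by simp [ha])

lemma unitReflection_mul_self (ha : B a a = 1) : unitReflection B a * unitReflection B a = 1 :=
  LinearMap.ext (Module.involutive_preReflection (by simp [ha]))

lemma apply_unitReflection_left (hB : B.IsSymm) :
    B (unitReflection B a v) w = B v (unitReflection B a w) := by
  simp only [unitReflection_apply, map_sub, map_smul, LinearMap.sub_apply, LinearMap.smul_apply,
    smul_eq_mul, hB.eq v a]
  ring

lemma apply_unitReflection_unitReflection (hB : B.IsSymm) (ha : B a a = 1) :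
    B (unitReflection B a v) (unitReflection B a w) = B v w := by
  rw [apply_unitReflection_left hB, ← Module.End.mul_apply, unitReflection_mul_self ha,
    Module.End.one_apply]

lemma unitReflection_chebyshev {c : R} (hb : B b b = 1) (hba : B b a = -c) (n : ℤ) :
    unitReflection B b ((U R n).eval c • a + (U R (n - 1)).eval c • b) =
      (U R (n + 1)).eval c • b + (U R n).eval c • a := by
  simp only [unitReflection_apply, map_add, map_smul, hb, hba, U_add_one, eval_sub, eval_mul,
    eval_X, eval_ofNat]
  module

lemma unitReflection_mul_pow_apply {c : R} (ha : B a a = 1) (hb : B b b = 1) (hab : B a b = -c)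
    (hba : B b a = -c) (k : ℕ) :
    ((unitReflection B a * unitReflection B b) ^ k) a =
      (U R (2 * k)).eval c • a + (U R (2 * k - 1)).eval c • b := by
  induction k with
  | zero => simp
  | succ k ih =>
    have := unitReflection_chebyshev ha hab (2 * k + 1)
    rw [add_sub_cancel_right] at this
    rw [pow_succ', Module.End.mul_apply, ih, Module.End.mul_apply,
      unitReflection_chebyshev hb hba, this]
    push_cast
    ring_nf

end CommRing

section Field

variable {K E : Type*} [Field K] [AddCommGroup E] [Module K E]
  {B : LinearMap.BilinForm K E} {a b : E}

lemma exists_smul_add_smul_add_orthogonal (ha : B a a = 1) (hb : B b b = 1)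
    (hab : B a b * B b a ≠ 1) (v : E) :
    ∃ (x y : K) (u : E), v = x • a + y • b + u ∧ B a u = 0 ∧ B b u = 0 := by
  have hdet : 1 - B a b * B b a ≠ 0 := sub_ne_zero.mpr hab.symm
  let x := (B a v - B a b * B b v) / (1 - B a b * B b a)
  let y := (B b v - B b a * B a v) / (1 - B a b * B b a)
  refine ⟨x, y, v - (x • a + y • b), by abel, ?_, ?_⟩ <;>
  · simp only [x, y, map_sub, map_add, map_smul, smul_eq_mul, ha, hb]
    field_simp
    ring

lemma unitReflection_mul_pow_eq_one (ha : B a a = 1) (hb : B b b = 1) (hab : B a b * B b a ≠ 1)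
    {k : ℕ} (hfix_a : ((unitReflection B a * unitReflection B b) ^ k) a = a)
    (hfix_b : ((unitReflection B a * unitReflection B b) ^ k) b = b) :
    (unitReflection B a * unitReflection B b) ^ k = 1 := by
  ext v
  obtain ⟨x, y, u, rfl, hau, hbu⟩ := exists_smul_add_smul_add_orthogonal ha hb hab v
  have hfix_u : ((unitReflection B a * unitReflection B b) ^ k) u = u := by
    rw [Module.End.pow_apply]
    exact Function.iterate_fixed
      (by rw [Module.End.mul_apply, unitReflection_eq_self hbu, unitReflection_eq_self hau]) k
  simp [hfix_a, hfix_b, hfix_u]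

end Field

section Real

open Real

variable {E : Type*} [AddCommGroup E] [Module ℝ E] {B : LinearMap.BilinForm ℝ E} {a b : E}

lemma sin_pi_div_pos {m : ℕ} (hm : 2 ≤ m) : 0 < sin (π / m) :=
  sin_pos_of_pos_of_lt_pi (by positivity) (div_lt_self pi_pos (by exact_mod_cast hm))

lemma eval_U_cos_pi_div {m : ℕ} (hm : 2 ≤ m) (n : ℤ) :
    (U ℝ n).eval (cos (π / m)) = sin ((n + 1) * (π / m)) / sin (π / m) :=
  eq_div_of_mul_eq (sin_pi_div_pos hm).ne' (U_real_cos _ n)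

lemma eval_U_cos_pi_div_nonneg {m : ℕ} (hm : m ≠ 1) {n : ℤ} (hn : -1 ≤ n) (hnm : m = 0 ∨ n < m) :
    0 ≤ (U ℝ n).eval (cos (π / m)) := by
  have hn' : (0 : ℝ) ≤ n + 1 := by exact_mod_cast neg_le_iff_add_nonneg.mp hn
  rcases eq_or_ne m 0 with rfl | hm0
  · simpa using hn'
  · replace hnm := hnm.resolve_left hm0
    have hm2 : 2 ≤ m := by omega
    rw [eval_U_cos_pi_div hm2]
    refine div_nonneg (sin_nonneg_of_nonneg_of_le_pi (by positivity) ?_) (sin_pi_div_pos hm2).le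
    rw [mul_div_assoc', div_le_iff₀ (by positivity), mul_comm π]
    gcongr
    exact_mod_cast hnm

lemma unitReflection_mul_pow_apply_of_cos {m : ℕ} (hm : 2 ≤ m) (ha : B a a = 1) (hb : B b b = 1)
    (hab : B a b = -cos (π / m)) (hba : B b a = -cos (π / m)) :
    ((unitReflection B a * unitReflection B b) ^ m) a = a := by
  have hcoeff_a : (U ℝ (2 * m)).eval (cos (π / m)) = 1 := by
    rw [eval_U_cos_pi_div hm, div_eq_one_iff_eq (sin_pi_div_pos hm).ne',
      ← sin_add_two_pi (π / m)]
    congr 1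
    push_cast
    field
  have hcoeff_b : (U ℝ (2 * m - 1)).eval (cos (π / m)) = 0 := by
    rw [eval_U_cos_pi_div hm, div_eq_zero_iff, ← sin_two_pi]
    left
    congr 1
    push_cast
    field
  rw [unitReflection_mul_pow_apply ha hb hab hba, hcoeff_a, hcoeff_b, one_smul, zero_smul, add_zero]

lemma unitReflection_mul_pow_eq_one_of_cos {m : ℕ} (hm : 2 ≤ m) (ha : B a a = 1) (hb : B b b = 1)
    (hab : B a b = -cos (π / m)) (hba : B b a = -cos (π / m)) :
    (unitReflection B a * unitReflection B b) ^ m = 1 := by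
  have hdet : B a b * B b a ≠ 1 := by
    rw [hab, hba]
    nlinarith [sin_sq_add_cos_sq (π / m), sin_pi_div_pos hm]
  have hinv : (unitReflection B a * unitReflection B b) ^ m *
      (unitReflection B b * unitReflection B a) ^ m = 1 := by
    refine pow_mul_pow_eq_one m ?_
    rw [mul_assoc, ← mul_assoc (unitReflection B b), unitReflection_mul_self hb, one_mul,
      unitReflection_mul_self ha]
  refine unitReflection_mul_pow_eq_one ha hb hdet
    (unitReflection_mul_pow_apply_of_cos hm ha hb hab hba) ?_
  simpa [unitReflection_mul_pow_apply_of_cos hm hb ha hba hab] using DFunLike.congr_fun hinv b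

lemma exists_unitReflection_mul_pow_apply_eq {c : E} (ha : B a a = 1) (hb : B b b = 1)
    (hab : B a b ≤ -1) (hba : B b a ≤ -1) (hac : B a c ≤ 1) (hbc : B b c ≤ -1) (k : ℕ) :
    ∃ p q : ℝ, 0 ≤ q ∧ q ≤ p ∧ 2 * k ≤ p ∧
      ((unitReflection B a * unitReflection B b) ^ k) c = c + p • a + q • b := by
  induction k with
  | zero => exact ⟨0, 0, by simp⟩
  | succ k ih =>
    obtain ⟨p, q, hq, hqp, hkp, h⟩ := ih
    let q' := -q - 2 * B b c - 2 * p * B b a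
    let p' := -p - 2 * B a c - 2 * q' * B a b
    have hq' : p + 2 ≤ q' := by simp only [q']; nlinarith
    have hp' : q' ≤ p' := by simp only [p']; nlinarith
    refine ⟨p', q', by linarith, hp', by push_cast; linarith, ?_⟩
    rw [pow_succ', Module.End.mul_apply, h, Module.End.mul_apply]
    simp only [unitReflection_apply, map_add, map_sub, map_smul, ha, hb, p', q']
    module

end Real

end UnitReflection

open CoxeterSystem

section GeometricRepresentation

open Polynomial.Chebyshev Real

variable {V : Type*}

/-- The Tits form of a Coxeter matrix: `B(e_v, e_w) = -cos (π / m(v, w))`. Since Mathlib encodes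
`m(v, w) = ∞` as `M v w = 0`, the junk value `π / 0 = 0` yields the wanted `B(e_v, e_w) = -1`. -/
noncomputable def coxeterForm (M : CoxeterMatrix V) : LinearMap.BilinForm ℝ (V →₀ ℝ) :=
  Finsupp.linearCombination ℝ fun v ↦ Finsupp.linearCombination ℝ fun w ↦ -cos (π / M v w)

lemma coxeterForm_single (M : CoxeterMatrix V) (v w : V) :
    coxeterForm M (.single v 1) (.single w 1) = -cos (π / M v w) := by
  simp [coxeterForm, Finsupp.linearCombination_single]

lemma coxeterForm_single_self (M : CoxeterMatrix V) (v : V) :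
    coxeterForm M (.single v 1) (.single v 1) = 1 := by
  simp [coxeterForm_single]

lemma coxeterForm_isSymm (M : CoxeterMatrix V) : (coxeterForm M).IsSymm := by
  refine ⟨fun x y ↦ ?_⟩
  suffices coxeterForm M = (coxeterForm M).flip from LinearMap.congr_fun₂ this x y
  ext v w
  simp [coxeterForm_single, M.symmetric v w]

lemma isLiftable_unitReflection (M : CoxeterMatrix V) :
    M.IsLiftable fun v ↦ unitReflection (coxeterForm M) (.single v 1) := by
  intro v w
  rcases eq_or_ne v w with rfl | hvw
  · rw [M.diagonal, pow_one, unitReflection_mul_self (coxeterForm_single_self M v)]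
  rcases eq_or_ne (M v w) 0 with h | h
  · rw [h, pow_zero]
  · have hm : 2 ≤ M v w := by have := M.off_diagonal v w hvw; omega
    exact unitReflection_mul_pow_eq_one_of_cos hm (coxeterForm_single_self M v)
      (coxeterForm_single_self M w) (coxeterForm_single M v w)
      (by rw [coxeterForm_single, M.symmetric])

variable {W : Type*} [Group W] {M : CoxeterMatrix V} (cs : CoxeterSystem M W)

/-- The geometric representation of a Coxeter group, in which the simple reflections act as
orthogonal reflections along the standard basis. -/
noncomputable def geomRep : W →* Module.End ℝ (V →₀ ℝ) :=
  cs.lift ⟨_, isLiftable_unitReflection M⟩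

lemma geomRep_simple (i : V) :
    geomRep cs (cs.simple i) = unitReflection (coxeterForm M) (.single i 1) :=
  cs.lift_apply_simple (isLiftable_unitReflection M) i

lemma geomRep_mul_apply (v w : W) (x : V →₀ ℝ) :
    geomRep cs (v * w) x = geomRep cs v (geomRep cs w x) := by
  rw [map_mul, Module.End.mul_apply]

lemma geomRep_apply_geomRep_inv_apply (w : W) (x : V →₀ ℝ) :
    geomRep cs w (geomRep cs w⁻¹ x) = x := by
  rw [← geomRep_mul_apply, mul_inv_cancel, map_one, Module.End.one_apply]

lemma coxeterForm_geomRep (w : W) (x y : V →₀ ℝ) :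
    coxeterForm M (geomRep cs w x) (geomRep cs w y) = coxeterForm M x y := by
  induction w using cs.simple_induction generalizing x y with
  | simple i =>
    rw [geomRep_simple]
    exact apply_unitReflection_unitReflection (coxeterForm_isSymm M) (coxeterForm_single_self M i)
  | one => simp
  | mul v w hv hw => rw [geomRep_mul_apply, geomRep_mul_apply, hv, hw]

lemma geomRep_conj {t : W} {a : V →₀ ℝ} (ht : geomRep cs t = unitReflection (coxeterForm M) a)
    (w : W) :
    geomRep cs (w * t * w⁻¹) = unitReflection (coxeterForm M) (geomRep cs w a) := by
  refine LinearMap.ext fun x ↦ ?_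
  have hform : coxeterForm M (geomRep cs w a) x = coxeterForm M a (geomRep cs w⁻¹ x) := by
    rw [← coxeterForm_geomRep cs w a, geomRep_apply_geomRep_inv_apply]
  rw [geomRep_mul_apply, geomRep_mul_apply, ht, unitReflection_apply, unitReflection_apply, hform,
    map_sub, map_smul, geomRep_apply_geomRep_inv_apply]

lemma exists_geomRep_wordProd_alternatingWord {i j : V} (hij : i ≠ j) {k : ℕ}
    (hk : M i j = 0 ∨ k < M i j) :
    ∃ p q : ℝ, 0 ≤ p ∧ 0 ≤ q ∧ geomRep cs (cs.wordProd (alternatingWord i j k)) (.single i 1) =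
      p • .single i 1 + q • .single j 1 := by
  have hnonneg (n : ℤ) (hn : -1 ≤ n) (hnk : n ≤ k) : 0 ≤ (U ℝ n).eval (cos (π / M i j)) :=
    eval_U_cos_pi_div_nonneg (M.off_diagonal i j hij) hn (hk.imp_right fun h ↦ by omega)
  have hji : coxeterForm M (.single j 1) (.single i 1) = -cos (π / M i j) := by
    rw [coxeterForm_single, M.symmetric]
  rw [cs.prod_alternatingWord_eq_mul_pow, geomRep_mul_apply, map_pow, map_mul, geomRep_simple,
    geomRep_simple, unitReflection_mul_pow_apply (coxeterForm_single_self M i)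
    (coxeterForm_single_self M j) (coxeterForm_single M i j) hji]
  split_ifs with heven
  · refine ⟨_, _, hnonneg (2 * (k / 2 : ℕ)) (by omega) (by omega),
      hnonneg (2 * (k / 2 : ℕ) - 1) (by omega) (by omega), ?_⟩
    rw [map_one, Module.End.one_apply]
  · rw [Nat.not_even_iff] at heven
    refine ⟨_, _, hnonneg (2 * (k / 2 : ℕ)) (by omega) (by omega),
      hnonneg (2 * (k / 2 : ℕ) + 1) (by omega) (by omega), ?_⟩
    rw [geomRep_simple, unitReflection_chebyshev (coxeterForm_single_self M j) hji, add_comm]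

-- The minimal length representative of `w` modulo the dihedral subgroup generated by `i` and `j`.
lemma exists_eq_mul_wordProd_alternatingWord {w : W} {i j : V} (hij : i ≠ j)
    (hwi : ¬ cs.IsRightDescent w i) :
    ∃ v k, w = v * cs.wordProd (alternatingWord i j k) ∧ cs.length w = cs.length v + k ∧
      ¬ cs.IsRightDescent v i ∧ ¬ cs.IsRightDescent v j ∧ (M i j = 0 ∨ k < M i j) := by
  induction hn : cs.length w generalizing w i j with
  | zero =>
    obtain rfl := cs.length_eq_zero_iff.mp hn
    exact ⟨1, 0, by simp [alternatingWord], by simp, hwi, cs.not_isRightDescent_one j, by omega⟩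
  | succ n ih =>
    by_cases hwj : cs.IsRightDescent w j
    · have hlen := cs.isRightDescent_iff.mp hwj
      obtain ⟨v, k, hv, hlen_v, hvj, hvi, hk⟩ := ih hij.symm
        (cs.isRightDescent_iff_not_isRightDescent_mul.mp hwj) (by omega)
      have hw : w = v * cs.wordProd (alternatingWord i j (k + 1)) := by
        rw [alternatingWord_succ, wordProd_concat, ← mul_assoc, ← hv,
          simple_mul_simple_cancel_right]
      refine ⟨v, k + 1, hw, by omega, hvi, hvj, ?_⟩
      rw [M.symmetric j i] at hk
      refine hk.imp_right fun hk ↦ lt_of_le_of_ne hk fun hkM ↦ hwi ?_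
      have hswap : cs.wordProd (alternatingWord i j (k + 1)) =
          cs.wordProd (alternatingWord j i (k + 1)) := by
        rw [cs.prod_alternatingWord_eq_prod_alternatingWord_sub i j _ (by omega), ← hkM]
        congr 2
        omega
      have hwi' : w * cs.simple i = v * cs.wordProd (alternatingWord i j k) := by
        rw [hw, hswap, alternatingWord_succ, wordProd_concat, ← mul_assoc,
          simple_mul_simple_cancel_right]
      rw [IsRightDescent, hwi']
      have := cs.length_mul_le v (cs.wordProd (alternatingWord i j k))
      have := cs.length_wordProd_le (alternatingWord i j k)
      rw [length_alternatingWord] at this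
      omega
    · exact ⟨w, 0, by simp [alternatingWord], by omega, hwi, hwj, by omega⟩

lemma geomRep_single_nonneg {w : W} {i : V} (hwi : ¬ cs.IsRightDescent w i) :
    0 ≤ geomRep cs w (.single i 1) := by
  induction hn : cs.length w using Nat.strong_induction_on generalizing w i with
  | _ n ih =>
    rcases eq_or_ne w 1 with rfl | hw
    · simp
    obtain ⟨j, hwj⟩ := cs.exists_rightDescent_of_ne_one hw
    have hij : i ≠ j := by rintro rfl; exact hwi hwj
    obtain ⟨v, k, rfl, hlen, hvi, hvj, hk⟩ := exists_eq_mul_wordProd_alternatingWord cs hij hwi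
    have hk0 : k ≠ 0 := by rintro rfl; exact hvj (by simpa [alternatingWord] using hwj)
    obtain ⟨p, q, hp, hq, hpq⟩ := exists_geomRep_wordProd_alternatingWord cs hij hk
    rw [geomRep_mul_apply, hpq, map_add, map_smul, map_smul]
    exact add_nonneg (smul_nonneg hp (ih _ (by omega) hvi rfl))
      (smul_nonneg hq (ih _ (by omega) hvj rfl))

lemma geomRep_single_nonpos {w : W} {i : V} (hwi : cs.IsRightDescent w i) :
    geomRep cs w (.single i 1) ≤ 0 := by
  have := geomRep_single_nonneg cs (cs.isRightDescent_iff_not_isRightDescent_mul.mp hwi)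
  rwa [geomRep_mul_apply, geomRep_simple, unitReflection_self (coxeterForm_single_self M i),
    map_neg, Left.nonneg_neg_iff] at this

lemma geomRep_injective : Function.Injective (geomRep cs) := by
  refine (injective_iff_map_eq_one _).mpr fun w hw ↦ ?_
  by_contra hw1
  obtain ⟨i, hwi⟩ := cs.exists_rightDescent_of_ne_one hw1
  have := geomRep_single_nonpos cs hwi i
  rw [hw, Module.End.one_apply, Finsupp.single_eq_same] at this
  exact absurd this (by simp)

end GeometricRepresentation

/-- The roots of a Coxeter system: the vectors `w e_i` of its geometric representation. -/
@[ext]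
structure CoxeterRoot {V W : Type*} [Group W] {M : CoxeterMatrix V} (cs : CoxeterSystem M W) where
  /-- The vector underlying a root. -/
  vec : V →₀ ℝ
  exists_geomRep_eq : ∃ w i, geomRep cs w (.single i 1) = vec

namespace CoxeterRoot

variable {V W : Type*} [Group W] {M : CoxeterMatrix V} {cs : CoxeterSystem M W}
  {x : CoxeterRoot cs}

noncomputable instance : MulAction W (CoxeterRoot cs) where
  smul w x := ⟨geomRep cs w x.vec, by
    obtain ⟨v, i, h⟩ := x.exists_geomRep_eq
    exact ⟨w * v, i, by rw [geomRep_mul_apply, h]⟩⟩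
  one_smul x := CoxeterRoot.ext (by change geomRep cs 1 x.vec = x.vec; simp)
  mul_smul v w x := CoxeterRoot.ext (geomRep_mul_apply cs v w x.vec)

lemma vec_smul (w : W) (x : CoxeterRoot cs) : (w • x).vec = geomRep cs w x.vec :=
  rfl

variable (cs) in
/-- The simple root indexed by `i`. -/
noncomputable def simple (i : V) : CoxeterRoot cs :=
  ⟨.single i 1, 1, i, by simp⟩

lemma exists_smul_simple_eq (x : CoxeterRoot cs) : ∃ (w : W) (i : V), w • simple cs i = x := by
  obtain ⟨w, i, h⟩ := x.exists_geomRep_eq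
  exact ⟨w, i, CoxeterRoot.ext h⟩

noncomputable instance : Neg (CoxeterRoot cs) where
  neg x := ⟨-x.vec, by
    obtain ⟨w, i, h⟩ := x.exists_geomRep_eq
    exact ⟨w * cs.simple i, i, by rw [geomRep_mul_apply, geomRep_simple,
      unitReflection_self (coxeterForm_single_self M i), map_neg, h]⟩⟩

lemma vec_neg (x : CoxeterRoot cs) : (-x).vec = -x.vec :=
  rfl

noncomputable instance : InvolutiveNeg (CoxeterRoot cs) where
  neg_neg x := CoxeterRoot.ext (neg_neg x.vec)

lemma smul_neg (w : W) (x : CoxeterRoot cs) : w • -x = -(w • x) :=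
  CoxeterRoot.ext (map_neg (geomRep cs w) x.vec)

/-- The value of the Tits form at two roots. -/
noncomputable def pairing (x y : CoxeterRoot cs) : ℝ :=
  coxeterForm M x.vec y.vec

lemma pairing_smul_smul (w : W) (x y : CoxeterRoot cs) :
    pairing (w • x) (w • y) = pairing x y :=
  coxeterForm_geomRep cs w x.vec y.vec

lemma pairing_comm (x y : CoxeterRoot cs) : pairing x y = pairing y x :=
  (coxeterForm_isSymm M).eq x.vec y.vec

lemma pairing_self (x : CoxeterRoot cs) : pairing x x = 1 := by
  obtain ⟨w, i, rfl⟩ := x.exists_smul_simple_eq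
  rw [pairing_smul_smul]
  exact coxeterForm_single_self M i

lemma pairing_neg_right (x y : CoxeterRoot cs) : pairing x (-y) = -pairing x y :=
  map_neg (coxeterForm M x.vec) y.vec

lemma pairing_neg_left (x y : CoxeterRoot cs) : pairing (-x) y = -pairing x y := by
  rw [pairing_comm, pairing_neg_right, pairing_comm]

lemma vec_ne_zero (x : CoxeterRoot cs) : x.vec ≠ 0 := by
  intro h
  have := x.pairing_self
  simp [pairing, h] at this

lemma exists_isReflection (x : CoxeterRoot cs) :
    ∃ t, cs.IsReflection t ∧ geomRep cs t = unitReflection (coxeterForm M) x.vec := by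
  obtain ⟨w, i, h⟩ := x.exists_geomRep_eq
  exact ⟨w * cs.simple i * w⁻¹, ⟨w, i, rfl⟩, by rw [geomRep_conj cs (geomRep_simple cs i), h]⟩

/-- The element of the Coxeter group acting as the reflection along the root `x`. -/
noncomputable def reflection (x : CoxeterRoot cs) : W :=
  x.exists_isReflection.choose

lemma isReflection_reflection (x : CoxeterRoot cs) : cs.IsReflection x.reflection :=
  x.exists_isReflection.choose_spec.1

lemma geomRep_reflection (x : CoxeterRoot cs) :
    geomRep cs x.reflection = unitReflection (coxeterForm M) x.vec :=
  x.exists_isReflection.choose_spec.2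

lemma vec_reflection_smul (x y : CoxeterRoot cs) :
    (x.reflection • y).vec = y.vec - (2 * pairing x y) • x.vec := by
  rw [vec_smul, geomRep_reflection, unitReflection_apply, pairing]

lemma pairing_reflection_smul (x y z : CoxeterRoot cs) :
    pairing x (y.reflection • z) = pairing x z - 2 * pairing y z * pairing x y := by
  rw [pairing, vec_reflection_smul, map_sub, map_smul]
  rfl

lemma reflection_smul_self (x : CoxeterRoot cs) : x.reflection • x = -x := by
  refine CoxeterRoot.ext ?_
  rw [vec_reflection_smul, pairing_self, vec_neg]
  module

lemma reflection_mul_self (x : CoxeterRoot cs) : x.reflection * x.reflection = 1 :=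
  x.isReflection_reflection.mul_self

lemma reflection_smul (w : W) (x : CoxeterRoot cs) :
    (w • x).reflection = w * x.reflection * w⁻¹ := by
  apply geomRep_injective cs
  rw [geomRep_reflection, geomRep_conj cs x.geomRep_reflection, vec_smul]

/-- A root is positive if it is a nonnegative combination of the simple roots. -/
def IsPos (x : CoxeterRoot cs) : Prop :=
  0 ≤ x.vec

lemma isPos_simple (i : V) : (simple cs i).IsPos :=
  Finsupp.single_nonneg.mpr zero_le_one

lemma isPos_smul_simple {w : W} {i : V} (h : ¬ cs.IsRightDescent w i) :
    (w • simple cs i).IsPos :=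
  geomRep_single_nonneg cs h

lemma not_isPos_smul_simple {w : W} {i : V} (h : cs.IsRightDescent w i) :
    ¬ (w • simple cs i).IsPos :=
  fun hpos ↦ vec_ne_zero _ (le_antisymm (geomRep_single_nonpos cs h) hpos)

lemma eq_one_of_forall_isPos_smul_simple {w : W} (h : ∀ i, (w • simple cs i).IsPos) : w = 1 := by
  by_contra hw
  obtain ⟨i, hi⟩ := cs.exists_rightDescent_of_ne_one hw
  exact not_isPos_smul_simple hi (h i)

lemma isPos_neg_iff : (-x).IsPos ↔ ¬ x.IsPos := by
  refine ⟨fun hneg hpos ↦ x.vec_ne_zero (le_antisymm (neg_nonneg.mp hneg) hpos), fun h ↦ ?_⟩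
  obtain ⟨w, i, rfl⟩ := x.exists_smul_simple_eq
  by_cases hwi : cs.IsRightDescent w i
  · exact neg_nonneg.mpr (geomRep_single_nonpos cs hwi)
  · exact absurd (isPos_smul_simple hwi) h

lemma eq_simple_of_not_isPos_smul {i : V} (hx : x.IsPos) (h : ¬ (cs.simple i • x).IsPos) :
    x = simple cs i := by
  have hneg : (cs.simple i • x).vec ≤ 0 := neg_nonneg.mp (isPos_neg_iff.mpr h)
  rw [vec_smul, geomRep_simple, unitReflection_apply] at hneg
  have hvec : x.vec = x.vec i • .single i 1 := by
    ext j
    rcases eq_or_ne j i with rfl | hj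
    · simp
    · have hle := hneg j
      simp only [Finsupp.sub_apply, Finsupp.smul_apply, Finsupp.single_eq_of_ne hj, smul_zero,
        sub_zero, Finsupp.zero_apply] at hle
      simpa [Finsupp.single_eq_of_ne hj] using le_antisymm hle (hx j)
  have hnorm : x.vec i * x.vec i = 1 := by
    have := x.pairing_self
    rwa [pairing, hvec, LinearMap.map_smul₂, map_smul, coxeterForm_single_self, smul_eq_mul,
      smul_eq_mul, mul_one] at this
  have hone : x.vec i = 1 := by nlinarith [hx i, Finsupp.zero_apply (M := ℝ) (a := i)]
  exact CoxeterRoot.ext (by rw [hvec, hone, one_smul, simple])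

lemma finite_setOf_isPos_smul_iff_not (w : W) :
    {x : CoxeterRoot cs | ¬ ((w • x).IsPos ↔ x.IsPos)}.Finite := by
  induction w using cs.simple_induction with
  | simple i =>
    refine (Set.toFinite {simple cs i, -simple cs i}).subset fun x hx ↦ ?_
    by_cases hpos : x.IsPos
    · exact .inl (eq_simple_of_not_isPos_smul hpos (by simpa [hpos] using hx))
    · refine .inr (neg_eq_iff_eq_neg.mp (eq_simple_of_not_isPos_smul (isPos_neg_iff.mpr hpos) ?_))
      rw [smul_neg, isPos_neg_iff]
      simpa [hpos] using hx
  | one => simp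
  | mul v w hv hw =>
    refine ((hv.preimage (MulAction.injective w).injOn).union hw).subset fun x hx ↦ ?_
    rw [Set.mem_ofPred_eq, mul_smul] at hx
    by_cases h : (w • x).IsPos ↔ x.IsPos
    · exact .inl fun h' ↦ hx (h'.trans h)
    · exact .inr h

end CoxeterRoot

section DihedralDynamics

lemma injective_pow_smul {G X : Type*} [Group G] [MulAction G X] {g : G} {x : X}
    (h : ∀ n ≠ 0, g ^ n • x ≠ x) : Function.Injective fun n : ℕ ↦ g ^ n • x := by
  refine Function.injective_iff_pairwise_ne.mpr <|
    (Std.Symm.pairwise_on _).mpr fun m n hmn heq ↦ h (n - m) (by omega) ?_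
  have hpow : g ^ n = g ^ m * g ^ (n - m) := by rw [← pow_add, Nat.add_sub_of_le hmn.le]
  rw [hpow, mul_smul, smul_left_cancel_iff] at heq
  exact heq.symm

lemma monotone_of_antitone_sub_of_nonneg {u : ℕ → ℝ} (hu : ∀ n, 0 ≤ u n)
    (hanti : Antitone fun n ↦ u (n + 1) - u n) : Monotone u := by
  refine monotone_nat_of_le_succ fun n ↦ ?_
  by_contra! hlt
  have hlin (m : ℕ) : u (n + m) ≤ u n + m * (u (n + 1) - u n) := by
    induction m with
    | zero => simp
    | succ m ih =>
      have hstep : u (n + m + 1) - u (n + m) ≤ u (n + 1) - u n := hanti (Nat.le_add_right n m)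
      rw [← add_assoc]
      push_cast
      linarith
  obtain ⟨m, hm⟩ := exists_nat_gt (u n / (u n - u (n + 1)))
  rw [div_lt_iff₀ (sub_pos.mpr hlt)] at hm
  linarith [hlin m, hu (n + m)]

lemma eq_zero_of_add_eq_mul_of_nonneg {k : ℝ} (hk : k < 2) {u : ℕ → ℝ} (hu : ∀ n, 0 ≤ u n)
    (hrec : ∀ n, u (n + 2) + u n = k * u (n + 1)) : u 0 = 0 := by
  have hdiff (n : ℕ) : u (n + 2) - u (n + 1) = u (n + 1) - u n - (2 - k) * u (n + 1) := by
    linarith [hrec n]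
  have hmono : Monotone u := monotone_of_antitone_sub_of_nonneg hu <|
    antitone_nat_of_succ_le fun n ↦ by nlinarith [hdiff n, hu (n + 1)]
  have hlin (n : ℕ) : u (n + 1) - u n ≤ u 1 - u 0 - n * ((2 - k) * u 1) := by
    induction n with
    | zero => simp
    | succ n ih =>
      push_cast
      nlinarith [hdiff n, hmono (Nat.le_add_left 1 n)]
  by_contra hne
  have hpos : 0 < (2 - k) * u 1 :=
    mul_pos (by linarith) ((lt_of_le_of_ne (hu 0) (Ne.symm hne)).trans_le (hmono zero_le_one))
  obtain ⟨n, hn⟩ := exists_nat_gt ((u 1 - u 0) / ((2 - k) * u 1))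
  rw [div_lt_iff₀ hpos] at hn
  linarith [hlin n, hmono n.le_succ]

namespace CoxeterRoot

variable {V W : Type*} [Group W] {M : CoxeterMatrix V} {cs : CoxeterSystem M W}
  {x y z : CoxeterRoot cs}

lemma exists_vec_pow_smul_eq (hxy : pairing x y ≤ -1) (hxz : pairing x z ≤ 1)
    (hyz : pairing y z ≤ -1) (n : ℕ) :
    ∃ p q : ℝ, 0 ≤ q ∧ q ≤ p ∧ 2 * n ≤ p ∧
      ((x.reflection * y.reflection) ^ n • z).vec = z.vec + p • x.vec + q • y.vec := by
  rw [vec_smul, map_pow, map_mul, geomRep_reflection, geomRep_reflection]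
  exact exists_unitReflection_mul_pow_apply_eq x.pairing_self y.pairing_self hxy
    (by rwa [pairing_comm] at hxy) hxz hyz n

lemma pow_smul_ne_self_of_pairing_le_neg_one (hx : x.IsPos) (hy : y.IsPos)
    (hxy : pairing x y ≤ -1) {n : ℕ} (hn : n ≠ 0) :
    (x.reflection * y.reflection) ^ n • x ≠ x := by
  intro heq
  obtain ⟨p, q, hq, -, hnp, hvec⟩ := exists_vec_pow_smul_eq hxy x.pairing_self.le
    (by rwa [pairing_comm] at hxy) n
  have hp : 0 < p := lt_of_lt_of_le (by positivity) hnp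
  rw [heq, add_assoc, left_eq_add] at hvec
  have hpx : p • x.vec ≤ 0 := hvec ▸ le_add_of_nonneg_right (smul_nonneg hq hy)
  exact smul_ne_zero hp.ne' x.vec_ne_zero (le_antisymm hpx (smul_nonneg hp.le hx))

-- Otherwise `w` would make infinitely many positive roots `(t_x t_y) ^ n • x` negative.
lemma isPos_smul_of_pairing_le_neg_one (hx : x.IsPos) (hy : y.IsPos) (hxy : pairing x y ≤ -1)
    {w : W} (hwx : ¬ (w • x).IsPos) : (w • y).IsPos := by
  by_contra hwy
  rw [← isPos_neg_iff] at hwx hwy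
  refine Set.infinite_of_injective_forall_mem
    (injective_pow_smul fun n ↦ pow_smul_ne_self_of_pairing_le_neg_one hx hy hxy)
    (fun n ↦ ?_) (finite_setOf_isPos_smul_iff_not w)
  obtain ⟨p, q, hq, hqp, -, hvec⟩ := exists_vec_pow_smul_eq hxy x.pairing_self.le
    (by rwa [pairing_comm] at hxy) n
  set u := (x.reflection * y.reflection) ^ n • x
  have hp : 0 ≤ p := hq.trans hqp
  have hu : u.IsPos := by
    rw [IsPos, hvec]
    exact add_nonneg (add_nonneg hx (smul_nonneg hp hx)) (smul_nonneg hq hy)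
  have hwu : (-(w • u)).IsPos := by
    have hwvec : (-(w • u)).vec =
        (-(w • x)).vec + p • (-(w • x)).vec + q • (-(w • y)).vec := by
      simp only [vec_neg, vec_smul, hvec, map_add, map_smul]
      module
    rw [IsPos, hwvec]
    exact add_nonneg (add_nonneg hwx (smul_nonneg hp hwx)) (smul_nonneg hq hwy)
  exact fun h ↦ isPos_neg_iff.mp hwu (h.mpr hu)

lemma vec_pow_add_two_smul (x y : CoxeterRoot cs) (n : ℕ) :
    ((x.reflection * y.reflection) ^ (n + 2) • x).vec +
      ((x.reflection * y.reflection) ^ n • x).vec =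
      (4 * pairing x y ^ 2 - 2) • ((x.reflection * y.reflection) ^ (n + 1) • x).vec := by
  have hzero : (x.reflection • y.reflection • x.reflection • y.reflection • x).vec + x.vec =
      (4 * pairing x y ^ 2 - 2) • (x.reflection • y.reflection • x).vec := by
    simp only [vec_reflection_smul, pairing_reflection_smul, pairing_self, pairing_comm y x]
    module
  have := congrArg (geomRep cs ((x.reflection * y.reflection) ^ n)) hzero
  simpa only [map_add, map_smul, ← vec_smul, smul_smul, pow_succ, mul_assoc] using this

lemma exists_forall_ge_isPos_pow_smul_iff {w : W}
    (hinj : Function.Injective fun n : ℕ ↦ w ^ n • x) :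
    ∃ N, ∀ n ≥ N, (w ^ n • x).IsPos ↔ (w ^ N • x).IsPos := by
  obtain ⟨N, hN⟩ := ((finite_setOf_isPos_smul_iff_not w).preimage hinj.injOn).bddAbove
  refine ⟨N + 1, fun n hn ↦ ?_⟩
  induction n, hn using Nat.le_induction with
  | base => rfl
  | succ n hn ih =>
    refine Iff.trans ?_ ih
    rw [pow_succ', mul_smul]
    by_contra h
    exact absurd (hN h) (by omega)

-- If the orbit were infinite, its vectors would eventually have constant sign, and so would their
-- coordinates, which satisfy an oscillating recursion.
lemma exists_pow_smul_eq_self (hxy : |pairing x y| < 1) :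
    ∃ n ≠ 0, (x.reflection * y.reflection) ^ n • x = x := by
  by_contra! hne
  obtain ⟨N, hN⟩ := exists_forall_ge_isPos_pow_smul_iff (injective_pow_smul hne)
  have hk : 4 * pairing x y ^ 2 - 2 < 2 := by linarith [(sq_lt_one_iff_abs_lt_one _).mpr hxy]
  let u (n : ℕ) := (x.reflection * y.reflection) ^ (N + n) • x
  have hu (n : ℕ) : (u n).IsPos ↔ (u 0).IsPos := hN _ (Nat.le_add_right N n)
  have hrec (n : ℕ) (i : V) :
      (u (n + 2)).vec i + (u n).vec i = (4 * pairing x y ^ 2 - 2) * (u (n + 1)).vec i :=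
    DFunLike.congr_fun (vec_pow_add_two_smul x y (N + n)) i
  refine (u 0).vec_ne_zero (Finsupp.ext fun i ↦ ?_)
  by_cases hpos : (u 0).IsPos
  · exact eq_zero_of_add_eq_mul_of_nonneg hk (fun n ↦ (hu n).mpr hpos i) (hrec · i)
  · have hneg (n : ℕ) : 0 ≤ -(u n).vec i := isPos_neg_iff.mpr (mt (hu n).mp hpos) i
    exact neg_eq_zero.mp <| eq_zero_of_add_eq_mul_of_nonneg hk hneg fun n ↦ by linarith [hrec n i]

lemma isOfFinOrder_reflection_mul_reflection (hxy : |pairing x y| < 1) :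
    IsOfFinOrder (x.reflection * y.reflection) := by
  obtain ⟨m, hm, hmx⟩ := exists_pow_smul_eq_self hxy
  obtain ⟨n, hn, hny⟩ := exists_pow_smul_eq_self (x := y) (y := x) (by rwa [pairing_comm])
  have hinv : y.reflection * x.reflection = (x.reflection * y.reflection)⁻¹ := by
    rw [mul_inv_rev, x.isReflection_reflection.inv, y.isReflection_reflection.inv]
  rw [hinv, inv_pow, inv_smul_eq_iff] at hny
  have hx : (x.reflection * y.reflection) ^ (m * n) • x = x := by
    rw [pow_mul]
    exact pow_mem (S := MulAction.stabilizer W x) hmx n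
  have hy : (x.reflection * y.reflection) ^ (m * n) • y = y := by
    rw [mul_comm, pow_mul]
    exact pow_mem (S := MulAction.stabilizer W y) hny.symm m
  have hdet : pairing x y * pairing y x ≠ 1 := by
    rw [pairing_comm y x, ← sq]
    exact ((sq_lt_one_iff_abs_lt_one _).mpr hxy).ne
  refine isOfFinOrder_iff_pow_eq_one.mpr ⟨m * n, by positivity, geomRep_injective cs ?_⟩
  rw [CoxeterRoot.ext_iff, vec_smul, map_pow, map_mul, geomRep_reflection, geomRep_reflection]
    at hx hy
  rw [map_pow, map_mul, geomRep_reflection, geomRep_reflection, map_one]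
  exact unitReflection_mul_pow_eq_one x.pairing_self y.pairing_self hdet hx hy

lemma pairing_sq_of_reflection_eq (h : x.reflection = y.reflection) : pairing x y ^ 2 = 1 := by
  have := pairing_reflection_smul x y x
  rw [← h, reflection_smul_self, pairing_neg_right, pairing_self, pairing_comm y x] at this
  linarith

lemma one_le_abs_pairing_smul {K : Subgroup W} [K.Normal] (hK : ∀ g ∈ K, IsOfFinOrder g → g = 1)
    {g : W} (hg : g ∈ K) (x : CoxeterRoot cs) : 1 ≤ |pairing x (g • x)| := by
  by_contra! hlt
  have hmem : x.reflection * (g • x).reflection ∈ K := by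
    have hcomm : x.reflection * (g • x).reflection =
        x.reflection * g * x.reflection⁻¹ * g⁻¹ := by
      rw [reflection_smul, x.isReflection_reflection.inv]
      group
    rw [hcomm]
    exact mul_mem (Subgroup.Normal.conj_mem ‹_› g hg _) (inv_mem hg)
  have hmul := hK _ hmem (isOfFinOrder_reflection_mul_reflection hlt)
  have heq : x.reflection = (g • x).reflection :=
    (eq_inv_of_mul_eq_one_left hmul).trans (g • x).isReflection_reflection.inv
  exact ((sq_lt_one_iff_abs_lt_one _).mpr hlt).ne (pairing_sq_of_reflection_eq heq)

end CoxeterRoot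

end DihedralDynamics

section CongruenceSubgroup

variable {n : Type*} [Fintype n] [DecidableEq n]

lemma matrix_eq_one_of_pow_eq_one {R S : Type*} [CommRing R] [IsDomain R] [CommRing S]
    [Nontrivial S] (f : R →+* S) {A : Matrix n n R} {k : ℕ} (hk : IsUnit (k : S))
    (hA : f.mapMatrix A = 1) (hpow : A ^ k = 1) : A = 1 := by
  let T := ∑ i ∈ Finset.range k, A ^ i
  have hmul : T * (A - 1) = 0 := by rw [geom_sum_mul, hpow, sub_self]
  have hT : f T.det = (k : S) ^ Fintype.card n := by
    have : f.mapMatrix T = (k : S) • 1 := by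
      simp only [T, map_sum, map_pow, hA, one_pow, Finset.sum_const, Finset.card_range,
        Nat.cast_smul_eq_nsmul]
    rw [f.map_det, this, Matrix.det_smul, Matrix.det_one, mul_one]
  have hdet : T.det ≠ 0 := fun h ↦ (hk.pow _).ne_zero (by rw [← hT, h, map_zero])
  exact sub_eq_zero.mp ((Matrix.isRegular_of_isLeftRegular_det
    (IsLeftCancelMulZero.mul_left_cancel_of_ne_zero hdet)).left (by simpa using hmul))

lemma matrix_eq_one_of_isOfFinOrder {A : Matrix n n ℤ} (hA : IsOfFinOrder A)
    (h₂ : (Int.castRingHom (ZMod 2)).mapMatrix A = 1)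
    (h₃ : (Int.castRingHom (ZMod 3)).mapMatrix A = 1) : A = 1 := by
  obtain ⟨k, hk, hpow⟩ := isOfFinOrder_iff_pow_eq_one.mp hA
  obtain ⟨r, m, hm, rfl⟩ := Nat.exists_eq_two_pow_mul_odd hk.ne'
  rw [pow_mul] at hpow
  refine matrix_eq_one_of_pow_eq_one (k := 2 ^ r) (Int.castRingHom (ZMod 3)) ?_ h₃
    (matrix_eq_one_of_pow_eq_one (Int.castRingHom (ZMod 2)) ?_ ?_ hpow)
  · exact (ZMod.isUnit_iff_coprime _ 3).mpr (Nat.Coprime.pow_left r (by norm_num))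
  · exact (ZMod.isUnit_iff_coprime m 2).mpr hm.coprime_two_right
  · rw [map_pow, h₂, one_pow]

theorem exists_finiteIndex_of_injective_addMonoidEnd {G L : Type*} [Group G] [AddCommGroup L]
    [AddGroup.FG L] [IsAddTorsionFree L] {φ : G →* AddMonoid.End L}
    (hφ : Function.Injective φ) :
    ∃ K : Subgroup G, K.Normal ∧ K.FiniteIndex ∧ ∀ g ∈ K, IsOfFinOrder g → g = 1 := by
  have : Module.Finite ℤ L := Module.Finite.iff_addGroup_fg.mpr inferInstance
  have : Module.Free ℤ L := Module.free_of_finite_type_torsion_free'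
  let b := Module.finBasis ℤ L
  let e : AddMonoid.End L ≃+* Matrix _ _ ℤ :=
    (addMonoidEndRingEquivInt L).trans (LinearMap.toMatrixAlgEquiv b).toRingEquiv
  let σ : G →* Matrix _ _ ℤ := e.toMonoidHom.comp φ
  have hσ : Function.Injective σ := e.injective.comp hφ
  let red (p : ℕ) : G →* Matrix _ _ (ZMod p) :=
    (Int.castRingHom (ZMod p)).mapMatrix.toMonoidHom.comp σ
  let τ := ((red 2).prod (red 3)).toHomUnits
  refine ⟨τ.ker, inferInstance, Subgroup.finiteIndex_ker τ, fun g hg hfin ↦ ?_⟩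
  have hred := congrArg Units.val ((MonoidHom.mem_ker).mp hg)
  refine hσ ((matrix_eq_one_of_isOfFinOrder (σ.isOfFinOrder hfin) ?_ ?_).trans σ.map_one.symm)
  · exact congrArg Prod.fst hred
  · exact congrArg Prod.snd hred

end CongruenceSubgroup

section RootLattice

variable {V : Type*} (M : CoxeterMatrix V)

/-- The ring generated by the entries of twice the Gram matrix of the Tits form. -/
noncomputable def cosRing : Subalgebra ℤ ℝ :=
  Algebra.adjoin ℤ (Set.range fun p : V × V ↦ 2 * Real.cos (Real.pi / M p.1 p.2))

/-- The lattice spanned by the simple roots over `cosRing M`. It is preserved by the Coxeter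
group, and is a finitely generated abelian group as the entries `2 cos (π / m)` are integral. -/
noncomputable def rootLattice : Submodule (cosRing M) (V →₀ ℝ) :=
  Submodule.span _ (Set.range fun i ↦ Finsupp.single i 1)

lemma single_mem_rootLattice (i : V) : Finsupp.single i 1 ∈ rootLattice M :=
  Submodule.subset_span ⟨i, rfl⟩

lemma two_mul_coxeterForm_single_mem_cosRing {i : V} {x : V →₀ ℝ} (hx : x ∈ rootLattice M) :
    2 * coxeterForm M (.single i 1) x ∈ cosRing M := by
  induction hx using Submodule.span_induction with
  | mem x hx =>
    obtain ⟨j, rfl⟩ := hx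
    rw [coxeterForm_single, mul_neg]
    exact neg_mem (Algebra.subset_adjoin ⟨(i, j), rfl⟩)
  | zero => simp
  | add x y _ _ hx hy => rw [map_add, mul_add]; exact add_mem hx hy
  | smul c x _ hx =>
    change 2 * coxeterForm M _ ((c : ℝ) • x) ∈ _
    rw [map_smul, smul_eq_mul, mul_left_comm]
    exact mul_mem c.2 hx

instance addGroupFG_rootLattice [Finite V] : AddGroup.FG (rootLattice M) := by
  have : Module.Finite ℤ (cosRing M) := by
    refine Module.Finite.iff_fg.mpr (fg_adjoin_of_finite (Set.finite_range _) ?_)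
    rintro _ ⟨p, rfl⟩
    have := Real.isIntegral_two_mul_cos_rat_mul_pi (1 / M p.1 p.2)
    rwa [Rat.cast_div, Rat.cast_one, Rat.cast_natCast, one_div_mul_eq_div] at this
  have : Module.Finite (cosRing M) (rootLattice M) :=
    Module.Finite.span_of_finite _ (Set.finite_range _)
  have h : Module.Finite ℤ (rootLattice M) := Module.Finite.trans (cosRing M) _
  exact Module.Finite.iff_addGroup_fg.mp h

variable {M} {W : Type*} [Group W] (cs : CoxeterSystem M W)

lemma geomRep_mem_rootLattice (w : W) {x : V →₀ ℝ} (hx : x ∈ rootLattice M) :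
    geomRep cs w x ∈ rootLattice M := by
  induction w using cs.simple_induction generalizing x with
  | simple i =>
    rw [geomRep_simple, unitReflection_apply]
    exact sub_mem hx ((rootLattice M).smul_mem
      ⟨_, two_mul_coxeterForm_single_mem_cosRing M hx⟩ (single_mem_rootLattice M i))
  | one => simpa
  | mul v w hv hw =>
    rw [geomRep_mul_apply]
    exact hv (hw hx)

/-- The integral form of the geometric representation, acting on the root lattice. -/
noncomputable def latticeRep : W →* AddMonoid.End (rootLattice M) where
  toFun w := (((geomRep cs w).restrictScalars (cosRing M)).restrict
    fun _ ↦ geomRep_mem_rootLattice cs w).toAddMonoidHom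
  map_one' := by ext; simp only [map_one]; rfl
  map_mul' v w := by ext; simp only [map_mul]; rfl

lemma latticeRep_injective : Function.Injective (latticeRep cs) := by
  refine fun v w h ↦ geomRep_injective cs (Finsupp.lhom_ext' fun i ↦ LinearMap.ext_ring ?_)
  exact congrArg Subtype.val (DFunLike.congr_fun h ⟨_, single_mem_rootLattice M i⟩)

end RootLattice

theorem exists_finiteIndex_torsionFree {V W : Type*} [Finite V] [Group W] {M : CoxeterMatrix V}
    (cs : CoxeterSystem M W) :
    ∃ K : Subgroup W, K.Normal ∧ K.FiniteIndex ∧ ∀ g ∈ K, IsOfFinOrder g → g = 1 :=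
  have : IsAddTorsionFree (rootLattice M) :=
    Subtype.val_injective.isAddTorsionFree (rootLattice M).subtype.toAddMonoidHom
  exists_finiteIndex_of_injective_addMonoidEnd (latticeRep_injective cs)

section FacingRoots

open Monoid

theorem not_fg_coprodI {ι : Type*} [Infinite ι] {H : ι → Type*} [∀ i, Group (H i)]
    [∀ i, Nontrivial (H i)] : ¬ Group.FG (CoprodI H) := by
  classical
  intro hfg
  obtain ⟨S, hS⟩ := Group.fg_def.mp hfg
  let proj (i : ι) : CoprodI H →* H i := CoprodI.lift (Pi.mulSingle i (MonoidHom.id (H i)))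
  have hfin (x : CoprodI H) : {i | proj i x ≠ 1}.Finite := by
    induction x using CoprodI.induction_on with
    | one => simp
    | of j m =>
      refine (Set.finite_singleton j).subset fun i hi ↦ ?_
      by_contra hij
      exact hi (by simp [proj, Pi.mulSingle_eq_of_ne (M := fun j ↦ H j →* H i) (Ne.symm hij)])
    | mul x y hx hy =>
      refine (hx.union hy).subset fun i hi ↦ ?_
      by_contra! hxy
      exact hi (by simp_all)
  obtain ⟨i, hi⟩ := (S.finite_toSet.biUnion fun x _ ↦ hfin x).exists_notMem
  simp only [Finset.mem_coe, Set.mem_iUnion, Set.mem_ofPred_eq, not_exists, not_not] at hi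
  have hproj : proj i = 1 := MonoidHom.eq_of_eqOn_dense hS hi
  obtain ⟨m, hm⟩ := exists_ne (1 : H i)
  exact hm ((CoprodI.of_leftInverse i m).symm.trans (DFunLike.congr_fun hproj _))

lemma eq_one_or_eq_of_mem_zpowers {G : Type*} [Group G] {g h : G} (hg : g * g = 1)
    (hh : h ∈ Subgroup.zpowers g) : h = 1 ∨ h = g := by
  obtain ⟨k, rfl⟩ := hh
  obtain ⟨m, rfl | rfl⟩ := k.even_or_odd'
  · left; simp [zpow_mul, zpow_ofNat, sq, hg]
  · right; simp [zpow_add, zpow_mul, zpow_ofNat, sq, hg]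

namespace CoxeterRoot

variable {V W : Type*} [Group W] {M : CoxeterMatrix V} {cs : CoxeterSystem M W}
  {x y z : CoxeterRoot cs}

lemma reflection_ne_one (x : CoxeterRoot cs) : x.reflection ≠ 1 := by
  intro h
  have := x.isReflection_reflection.odd_length
  simp [h] at this

/-- A family of roots is facing if the pairings of its distinct members are at most `-1`: the
half-spaces bounded by their mirrors then face each other. -/
def IsFacing {ι : Type*} (γ : ι → CoxeterRoot cs) : Prop :=
  Pairwise fun i j ↦ pairing (γ i) (γ j) ≤ -1

/-- The ping-pong regions of a facing family. -/
def pingPongSet {ι : Type*} (γ : ι → CoxeterRoot cs) (i : ι) : Set (CoxeterRoot cs) :=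
  {x | 0 < pairing (γ i) x ∧ ∀ j ≠ i, pairing (γ j) x ≤ -pairing (γ i) x}

lemma disjoint_pingPongSet {ι : Type*} (γ : ι → CoxeterRoot cs) {i j : ι} (hij : i ≠ j) :
    Disjoint (pingPongSet γ i) (pingPongSet γ j) := by
  refine Set.disjoint_left.mpr fun x hi hj ↦ ?_
  linarith [hi.1, hj.1, hi.2 j hij.symm]

lemma IsFacing.mem_pingPongSet {ι : Type*} {γ : ι → CoxeterRoot cs} (hγ : IsFacing γ) (i : ι) :
    γ i ∈ pingPongSet γ i := by
  simp only [pingPongSet, Set.mem_ofPred_eq, pairing_self]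
  exact ⟨zero_lt_one, fun j hj ↦ hγ hj⟩

lemma IsFacing.reflection_smul_mem_pingPongSet {ι : Type*} {γ : ι → CoxeterRoot cs}
    (hγ : IsFacing γ) {i j : ι} (hij : i ≠ j) (hx : x ∈ pingPongSet γ j) :
    (γ i).reflection • x ∈ pingPongSet γ i := by
  have hxi := hx.2 i hij
  simp only [pingPongSet, Set.mem_ofPred_eq, pairing_reflection_smul, pairing_self]
  refine ⟨by linarith [hx.1], fun k hki ↦ ?_⟩
  have hkx : pairing (γ k) x ≤ pairing (γ j) x := by
    rcases eq_or_ne k j with rfl | hkj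
    · rfl
    · linarith [hx.1, hx.2 k hkj]
  nlinarith [hγ hki, hx.1]

theorem IsFacing.not_fg_closure_reflection {ι : Type*} [Infinite ι] {γ : ι → CoxeterRoot cs}
    (hγ : IsFacing γ) : ¬ (Subgroup.closure (Set.range fun i ↦ (γ i).reflection)).FG := by
  let f (i : ι) := (Subgroup.zpowers (γ i).reflection).subtype
  have hinj : Function.Injective (CoprodI.lift f) := by
    refine CoprodI.lift_injective_of_ping_pong f
      (.inl ((Cardinal.natCast_le_aleph0 (n := 3)).trans (Cardinal.aleph0_le_mk ι))) _
      (fun i ↦ ⟨_, hγ.mem_pingPongSet i⟩) (fun i j ↦ disjoint_pingPongSet γ) ?_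
    rintro i j hij h hh _ ⟨x, hx, rfl⟩
    obtain h1 | hrefl := eq_one_or_eq_of_mem_zpowers (γ i).reflection_mul_self h.2
    · exact absurd (Subtype.ext h1) hh
    · simpa [f, hrefl] using hγ.reflection_smul_mem_pingPongSet hij hx
  have hrange : (CoprodI.lift f).range = Subgroup.closure (Set.range fun i ↦ (γ i).reflection) := by
    rw [CoprodI.range_eq_iSup, ← Set.iUnion_singleton_eq_range, Subgroup.closure_iUnion]
    simp only [f, Subgroup.range_subtype, Subgroup.zpowers_eq_closure]
  have (i : ι) : Nontrivial (Subgroup.zpowers (γ i).reflection) := by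
    rw [Subgroup.nontrivial_iff_ne_bot, Ne, Subgroup.zpowers_eq_bot]
    exact (γ i).reflection_ne_one
  rw [← hrange, ← Group.fg_iff_subgroup_fg]
  intro hfg
  exact not_fg_coprodI
    (Group.fg_of_surjective (f := (MonoidHom.ofInjective hinj).symm.toMonoidHom)
      (MulEquiv.surjective _))

lemma isFacing_pow_smul (hxy : pairing x y ≤ -1) (hxz : pairing x z ≤ -1)
    (hyz : pairing y z ≤ -1) :
    IsFacing fun n : ℕ ↦ (x.reflection * y.reflection) ^ n • z := by
  let r (u v : CoxeterRoot cs) : Prop := pairing u v ≤ -1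
  have : Std.Symm r := ⟨fun u v h ↦ (pairing_comm v u).trans_le h⟩
  refine (Std.Symm.pairwise_on (r := r) _).mpr fun m n hmn ↦ ?_
  change pairing _ _ ≤ -1
  rw [← Nat.add_sub_of_le hmn.le, pow_add, mul_smul, pairing_smul_smul]
  obtain ⟨p, q, hq, hqp, hp, hvec⟩ := exists_vec_pow_smul_eq hxy (hxz.trans (by norm_num)) hyz
    (n - m)
  have hcast : (1 : ℝ) ≤ (n - m : ℕ) := by exact_mod_cast Nat.sub_pos_of_lt hmn
  have hpair : pairing z ((x.reflection * y.reflection) ^ (n - m) • z) =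
      1 + p * pairing x z + q * pairing y z := by
    rw [← z.pairing_self, pairing_comm x, pairing_comm y, pairing, hvec]
    simp only [pairing, map_add, map_smul, smul_eq_mul]
  rw [hpair]
  nlinarith

end CoxeterRoot

end FacingRoots

section SignCharacter

namespace CoxeterRoot

variable {V W : Type*} [Group W] {M : CoxeterMatrix V} {cs : CoxeterSystem M W}
  {x y z : CoxeterRoot cs}

lemma neg_one_lt_pairing_of_fg
    (hW : ∀ T : Set W, (∀ t ∈ T, cs.IsReflection t) → (Subgroup.closure T).FG)
    (hxy : pairing x y ≤ -1) (hxz : pairing x z ≤ -1) : -1 < pairing y z := by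
  by_contra! hyz
  exact (isFacing_pow_smul hxy hxz hyz).not_fg_closure_reflection
    (hW _ (Set.forall_mem_range.mpr fun n ↦ isReflection_reflection _))

lemma pairing_mul_pairing_mul_pairing_pos
    (hfacing : ∀ x y z : CoxeterRoot cs, pairing x y ≤ -1 → pairing x z ≤ -1 → -1 < pairing y z)
    (hxy : 1 ≤ |pairing x y|) (hyz : 1 ≤ |pairing y z|) (hxz : 1 ≤ |pairing x z|) :
    0 < pairing x y * pairing y z * pairing x z := by
  wlog hy : pairing x y ≤ -1 generalizing y
  · have := this (y := -y) (by simpa [pairing_neg_right]) (by simpa [pairing_neg_left])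
      (by rw [pairing_neg_right]; linarith [(le_abs'.mp hxy).resolve_left hy])
    simpa [pairing_neg_left, pairing_neg_right] using this
  wlog hz : pairing x z ≤ -1 generalizing z
  · have := this (z := -z) (by simpa [pairing_neg_right]) (by simpa [pairing_neg_right])
      (by rw [pairing_neg_right]; linarith [(le_abs'.mp hxz).resolve_left hz])
    simpa [pairing_neg_right] using this
  have hyz' := (le_abs'.mp hyz).resolve_left (hfacing x y z hy hz).not_ge
  have := mul_pos_of_neg_of_neg (hy.trans_lt neg_one_lt_zero) (hz.trans_lt neg_one_lt_zero)
  nlinarith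

/-- The sign of the pairing of `x` and `g • x`, a character of any subgroup `K` all of whose
elements `g` move the mirror of `x` to one that does not cross it. -/
noncomputable def signHom
    (hfacing : ∀ x y z : CoxeterRoot cs, pairing x y ≤ -1 → pairing x z ≤ -1 → -1 < pairing y z)
    {K : Subgroup W} (hK : ∀ g ∈ K, 1 ≤ |pairing x (g • x)|) :
    K →* SignType where
  toFun g := SignType.sign (pairing x ((g : W) • x))
  map_one' := by rw [Subgroup.coe_one, one_smul, pairing_self, sign_one]
  map_mul' g h := by
    have hgh : pairing ((g : W) • x) ((g * h : W) • x) = pairing x ((h : W) • x) := by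
      rw [mul_smul, pairing_smul_smul]
    have hpos := pairing_mul_pairing_mul_pairing_pos hfacing (hK g g.2) (hgh ▸ hK h h.2)
      (hK (g * h) (g * h).2)
    have hsign := sign_pos hpos
    rw [hgh, sign_mul, sign_mul] at hsign
    rw [Subgroup.coe_mul]
    exact (by decide : ∀ a b c : SignType, a * b * c = 1 → c = a * b) _ _ _ hsign

end CoxeterRoot

end SignCharacter

section SignChangeCount

variable {G X : Type*} [Group G] [MulAction G X] {P : Set X}

lemma hasFiniteSupport_indicator_sub (hP : ∀ g : G, {x | ¬ (g • x ∈ P ↔ x ∈ P)}.Finite) (g : G) :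
    (fun x ↦ P.indicator (1 : X → ℤ) x - P.indicator 1 (g • x)).HasFiniteSupport := by
  refine (hP g).subset fun x hx hiff ↦ hx ?_
  by_cases h : x ∈ P <;> simp_all

/-- The number of points that `g` moves out of `P` minus the number of points that `g` moves into
`P`, as a homomorphism. It is encoded as a sum of differences of indicator functions, which is
additive in `g` because it telescopes. -/
noncomputable def netExitHom (hP : ∀ g : G, {x | ¬ (g • x ∈ P ↔ x ∈ P)}.Finite) :
    G →* Multiplicative ℤ where
  toFun g := .ofAdd (∑ᶠ x, (P.indicator 1 x - P.indicator 1 (g • x)))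
  map_one' := by simp
  map_mul' g h := by
    rw [← ofAdd_add, add_comm, ← finsum_comp_equiv (MulAction.toPerm h) (f := fun x ↦
      P.indicator 1 x - P.indicator 1 (g • x)), ← finsum_add_distrib]
    · simp only [MulAction.toPerm_apply, sub_add_sub_cancel, mul_smul]
    · exact hasFiniteSupport_indicator_sub hP h
    · exact (hasFiniteSupport_indicator_sub hP g).preimage (MulAction.injective h).injOn

lemma smul_mem_of_netExitHom_eq_one {hP : ∀ g : G, {x | ¬ (g • x ∈ P ↔ x ∈ P)}.Finite} {g : G}
    (hg : netExitHom hP g = 1) (hexit : ∀ x, g • x ∈ P → x ∈ P) {x : X} (hx : x ∈ P) :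
    g • x ∈ P := by
  by_contra hgx
  refine (finsum_pos (fun y ↦ ?_) ⟨x, ?_⟩ (hasFiniteSupport_indicator_sub hP g)).ne'
    (Multiplicative.ofAdd.injective hg)
  · by_cases hy : g • y ∈ P
    · simp [hy, hexit y hy]
    · simpa [hy] using P.indicator_nonneg (f := 1) (fun _ _ ↦ zero_le_one) y
  · simp [hx, hgx]

end SignChangeCount

section OrbitExit

namespace CoxeterRoot

variable {V W : Type*} [Group W] {M : CoxeterMatrix V} {cs : CoxeterSystem M W} (K : Subgroup W)

lemma finite_setOf_mem_orbit_isPos_smul_iff_not (x : CoxeterRoot cs) (g : K) :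
    {y | ¬ (g • y ∈ {y ∈ MulAction.orbit K x | y.IsPos} ↔
      y ∈ {y ∈ MulAction.orbit K x | y.IsPos})}.Finite := by
  refine (finite_setOf_isPos_smul_iff_not (cs := cs) (g : W)).subset fun y hy hiff ↦ hy ?_
  rw [Set.mem_sep_iff, Set.mem_sep_iff, ← MulAction.orbit_eq_iff, MulAction.orbit_smul,
    MulAction.orbit_eq_iff, Subgroup.smul_def, hiff]

/-- The net number of positive roots in the `K`-orbit of `x` that an element of `K` makes
negative. -/
noncomputable def orbitExitHom (x : CoxeterRoot cs) : K →* Multiplicative ℤ :=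
  netExitHom (finite_setOf_mem_orbit_isPos_smul_iff_not K x)

variable {K} {x : CoxeterRoot cs}

lemma isPos_smul_of_orbitExitHom_eq_one (hK : ∀ k ∈ K, 1 ≤ pairing x (k • x)) (hx : x.IsPos)
    {g : K} (hg : orbitExitHom K x g = 1) : ((g : W) • x).IsPos := by
  by_contra hgx
  refine hgx (smul_mem_of_netExitHom_eq_one hg (fun y hy ↦ ?_)
    ⟨MulAction.mem_orbit_self x, hx⟩).2
  obtain ⟨horbit, hgy⟩ := hy
  rw [← MulAction.orbit_eq_iff, MulAction.orbit_smul, MulAction.orbit_eq_iff] at horbit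
  refine ⟨horbit, ?_⟩
  obtain ⟨k, rfl⟩ := horbit
  by_contra hneg
  have hpairing : pairing x (-(k • x)) ≤ -1 := by
    rw [pairing_neg_right]
    exact neg_le_neg (hK k k.2)
  have := isPos_smul_of_pairing_le_neg_one hx (isPos_neg_iff.mpr hneg) hpairing hgx
  rw [smul_neg, isPos_neg_iff] at this
  exact this hgy

variable [Finite V]

lemma hereditarilyFinitelyPresented_of_one_le_pairing
    (hK : ∀ i, ∀ g ∈ K, 1 ≤ pairing (simple cs i) (g • simple cs i)) :
    HereditarilyFinitelyPresented K := by
  refine .of_injective (MonoidHom.pi fun i ↦ orbitExitHom K (simple cs i))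
    ((injective_iff_map_eq_one _).mpr fun g hg ↦ ?_) (.pi .multiplicative_int)
  exact Subtype.ext (eq_one_of_forall_isPos_smul_simple fun i ↦
    isPos_smul_of_orbitExitHom_eq_one (hK i) (isPos_simple i) (congrFun hg i))

end CoxeterRoot

end OrbitExit

section Coherence

variable {V W : Type*} [Finite V] [Group W] {M : CoxeterMatrix V}

open CoxeterRoot

lemma CoxeterRoot.hereditarilyFinitelyPresented_of_one_le_abs_pairing
    {cs : CoxeterSystem M W} {K : Subgroup W}
    (hfacing : ∀ x y z : CoxeterRoot cs, pairing x y ≤ -1 → pairing x z ≤ -1 → -1 < pairing y z)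
    (hK : ∀ i, ∀ g ∈ K, 1 ≤ |pairing (simple cs i) (g • simple cs i)|) :
    HereditarilyFinitelyPresented K := by
  let ε : K →* V → SignTypeˣ := MonoidHom.pi fun i ↦ (signHom hfacing (hK i)).toHomUnits
  have hε : ∀ i, ∀ g ∈ ε.ker.map K.subtype, 1 ≤ pairing (simple cs i) (g • simple cs i) := by
    rintro i _ ⟨g, hg, rfl⟩
    have hsign : SignType.sign (pairing (simple cs i) ((g : W) • simple cs i)) = 1 :=
      congrArg Units.val (congrFun hg i)
    exact (hK i g g.2).trans_eq (abs_of_pos (sign_eq_one_iff.mp hsign))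
  exact .of_ker ε (.of_injective (ε.ker.equivMapOfInjective _ K.subtype_injective).toMonoidHom
    (MulEquiv.injective _) (hereditarilyFinitelyPresented_of_one_le_pairing hε)) .of_finite

theorem coxeterGroup_coherent_of_slender_general (cs : CoxeterSystem M W)
    (hW : ∀ T : Set W, (∀ t ∈ T, cs.IsReflection t) → (Subgroup.closure T).FG) (H : Subgroup W) :
    Group.FinitelyPresented H := by
  obtain ⟨K, hnormal, hfin, htorsion⟩ := exists_finiteIndex_torsionFree cs
  have hK : HereditarilyFinitelyPresented K :=
    hereditarilyFinitelyPresented_of_one_le_abs_pairing (cs := cs)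
      (fun _ _ _ ↦ neg_one_lt_pairing_of_fg hW)
      fun i _ hg ↦ one_le_abs_pairing_smul htorsion hg (simple cs i)
  refine finitelyPresented_of_isFinitelyPresented
    (HereditarilyFinitelyPresented.of_ker (QuotientGroup.mk' K) ?_ .of_finite H)
  rwa [QuotientGroup.ker_mk']

end Coherence

/-- Every slender finitely generated Coxeter group is coherent. -/
theorem coxeterGroup_coherent_of_slender
    {V : Type} [Fintype V] (M : CoxeterMatrix V)
    (h : Group.Slender M.Group) :
    Group.Coherent M.Group :=
  fun H _ ↦ coxeterGroup_coherent_of_slender_general M.toCoxeterSystem (fun _ _ ↦ h _) H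
end

section
/- Let A ∗_C B be an amalgamated free product of groups. If A and B are coherent and C is slender, then A ∗_C B is coherent. In particular, the free product of two coherent groups is coherent. -/
/-!
Let `P = A ∗_C B` and let `ψ : F → P` be a homomorphism from a finitely generated free group. Let
`F × P` act on `P` by `(w, p) • x = p x (ψ w)⁻¹`; this is the `F × P`-set `(F × P) ⧸ graph ψ`. Its
`F`-stabilizers are all equal to `ker ψ`, and `P` acts freely. Finitely many points and finitely
many relations `e • x = x'` between them, with `e` in `F × A` or in `F × B`, express `ψ s`, for each
generator `s` of `F`, as a product of elements of `A` and `B`. Since `A` and `B` are coherent, there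
is a finite set `Y ⊆ ker ψ` with normal closure `N` such that these relations lift to an `F × A`-set
and to an `F × B`-set in which the `F`-stabilizers are `N`. Since `C` meets conjugates of `ψ F` in
finitely generated subgroups, finitely many further relations make the two lifts agree as far as `C`
is concerned, and by the universal property of `P` they can be glued to a `P`-set. There `ψ w` sends
the image of the base point translated by `u ∈ F` to that of the base point translated by `u w⁻¹`,
so every element of `ker ψ` fixes the base point, i.e. lies in `N`.
-/

open Cardinal Function MulAction Subgroup

universe u

section Coherence

variable {G L V : Type*} [Group G] [Group L] [Group V]

theorem finitelyPresented_iff_isFinitelyPresented :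
    Group.FinitelyPresented G ↔ Group.IsFinitelyPresented G := by
  constructor
  · rintro ⟨n, rels, hrels, ⟨e⟩⟩
    have := hrels.to_subtype
    exact .equiv e
  · intro h
    obtain ⟨n, rels, hrels, ⟨e⟩⟩ := h.exists_mulEquiv_presentedGroup
    exact ⟨n, rels, hrels, ⟨e.symm⟩⟩

theorem isFinitelyNormallyGenerated_ker_of_surjective [Group.FG L] [Group.IsFinitelyPresented V]
    {θ : L →* V} (hθ : Surjective θ) : θ.ker.IsFinitelyNormallyGenerated := by
  obtain ⟨n, φ, hφ, rels, hrels, hker⟩ := Group.IsFinitelyPresented.out (G := V)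
  obtain ⟨S, hS, hSfin⟩ := Group.fg_iff.1 ‹Group.FG L›
  obtain ⟨η, rfl⟩ : ∃ η : FreeGroup (Fin n) →* L, θ.comp η = φ :=
    ⟨FreeGroup.lift fun i ↦ surjInv hθ (φ (.of i)), by ext; simp [surjInv_eq]⟩
  choose w hw using fun x ↦ hφ (θ x)
  -- Adding the relations `x = η (w x)` for the generators `x` makes `η` surjective.
  let T := η '' rels ∪ (fun x ↦ (η (w x))⁻¹ * x) '' S
  have rels_le : rels ⊆ (θ.comp η).ker := hker ▸ subset_normalClosure
  have le_ker : normalClosure T ≤ θ.ker := by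
    refine normalClosure_le_normal ?_
    rintro _ (⟨r, hr, rfl⟩ | ⟨x, -, rfl⟩)
    · exact rels_le hr
    · simpa [MonoidHom.mem_ker, inv_mul_eq_one] using hw x
  have ker_le : (θ.comp η).ker ≤ (normalClosure T).comap η :=
    hker ▸ normalClosure_le_normal fun r hr ↦ subset_normalClosure (Or.inl ⟨r, hr, rfl⟩)
  have range_sup : η.range ⊔ normalClosure T = ⊤ := by
    rw [eq_top_iff, ← hS, closure_le]
    intro x hx
    exact mem_sup_of_normal_right.2
      ⟨η (w x), ⟨_, rfl⟩, _, subset_normalClosure (Or.inr ⟨x, hx, rfl⟩), by simp⟩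
  refine ⟨T, (hrels.image _).union (hSfin.image _), le_antisymm le_ker fun l hl ↦ ?_⟩
  obtain ⟨_, ⟨v, rfl⟩, m, hm, rfl⟩ := mem_sup_of_normal_right.1 (range_sup ▸ mem_top l)
  have hv : v ∈ (θ.comp η).ker := (mul_mem_cancel_right (le_ker hm)).1 hl
  exact mul_mem (ker_le hv) hm

theorem isFinitelyNormallyGenerated_ker_of_coherent [Group.FG L] (hG : Group.Coherent G)
    (θ : L →* G) : θ.ker.IsFinitelyNormallyGenerated := by
  have : Group.IsFinitelyPresented θ.range :=
    finitelyPresented_iff_isFinitelyPresented.1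
      (hG _ ((Group.fg_iff_subgroup_fg _).1 inferInstance))
  simpa using isFinitelyNormallyGenerated_ker_of_surjective θ.rangeRestrict_surjective

theorem coherent_of_isFinitelyNormallyGenerated_ker
    (h : ∀ (α : Type) [Finite α] (ψ : FreeGroup α →* G), ψ.ker.IsFinitelyNormallyGenerated) :
    Group.Coherent G := by
  intro H hH
  obtain ⟨α, _, φ, hφ⟩ := Group.fg_iff_exists_freeGroup_hom_surjective_finite.1
    ((Group.fg_iff_subgroup_fg H).2 hH)
  rw [finitelyPresented_iff_isFinitelyPresented]
  refine .of_surjective φ hφ ?_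
  exact MonoidHom.ker_comp_of_injective φ H.subtype H.subtype_injective ▸ h α (H.subtype.comp φ)

theorem exists_finite_subset_comap_inl {F A : Type*} [Group F] [Group A] (hA : Group.Coherent A)
    {L : Subgroup (F × A)} (hL : L.FG) :
    ∃ Y : Set F, Y.Finite ∧ Y ⊆ L.comap (.inl F A) ∧
      ∀ N : Subgroup F, N.Normal → Y ⊆ N → L.comap (.inl F A) ≤ N := by
  have : Group.FG L := (Group.fg_iff_subgroup_fg L).2 hL
  obtain ⟨T, hT, hker⟩ :=
    isFinitelyNormallyGenerated_ker_of_coherent hA ((MonoidHom.snd F A).comp L.subtype)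
  let fst : L →* F := (MonoidHom.fst F A).comp L.subtype
  refine ⟨fst '' T, hT.image _, ?_, fun N _ hN w hw ↦ ?_⟩
  · rintro _ ⟨⟨⟨w, a⟩, hwa⟩, hT, rfl⟩
    obtain rfl : a = 1 := hker.le (subset_normalClosure hT)
    exact hwa
  · have hle : normalClosure T ≤ N.comap fst :=
      normalClosure_le_normal fun x hx ↦ hN ⟨x, hx, rfl⟩
    exact hle (hker.ge (x := ⟨(w, 1), hw⟩) rfl)

end Coherence

section Arrows

variable {Q D E X : Type*} [Group D] [Group E] [MulAction E X] {q : Q → X}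

/-- Regard a triple `(i, e, i')` as an arrow from `i` to `i'` labelled by `e`. A family of points
`q` of an `E`-set realizes a set of arrows if every label moves the point at the source of its arrow
to the point at the target. -/
def Realizes {M : Type*} [SMul M X] (R : Set (Q × M × Q)) (q : Q → X) : Prop :=
  ∀ ⦃i e i'⦄, (i, e, i') ∈ R → e • q i = q i'

/-- The arrows of the groupoid generated by a set of arrows. -/
inductive Generated (R : Set (Q × E × Q)) : Q → E → Q → Prop
  | of {i e i'} (h : (i, e, i') ∈ R) : Generated R i e i'
  | one (i) : Generated R i 1 i
  | mul {i e i' e' i''} (h : Generated R i e i') (h' : Generated R i' e' i'') :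
    Generated R i (e' * e) i''
  | inv {i e i'} (h : Generated R i e i') : Generated R i' e⁻¹ i

/-- Relabelling of a set of arrows. -/
def mapArrows {M M' : Type*} (φ : M → M') (R : Set (Q × M × Q)) : Set (Q × M' × Q) :=
  Prod.map id (Prod.map φ id) '' R

theorem Realizes.smul_eq {R : Set (Q × E × Q)} (hq : Realizes R q) {i e i'}
    (h : Generated R i e i') : e • q i = q i' := by
  induction h with
  | of h => exact hq h
  | one => exact one_smul _ _
  | mul _ _ ih ih' => rw [mul_smul, ih, ih']
  | inv _ ih => rw [inv_smul_eq_iff, ih]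

theorem Realizes.mono {R R' : Set (Q × E × Q)} (hq : Realizes R q) (h : R' ⊆ R) : Realizes R' q :=
  fun _ _ _ hr ↦ hq (h hr)

theorem Generated.mono {R R' : Set (Q × E × Q)} (h : R ⊆ R') {i e i'} (hg : Generated R i e i') :
    Generated R' i e i' := by
  induction hg with
  | of hr => exact .of (h hr)
  | one i => exact .one i
  | mul _ _ ih ih' => exact .mul ih ih'
  | inv _ ih => exact .inv ih

theorem realizes_mapArrows {M M' : Type*} [SMul M' X] {φ : M → M'} {R : Set (Q × M × Q)} :
    Realizes (mapArrows φ R) q ↔ ∀ ⦃i e i'⦄, (i, e, i') ∈ R → φ e • q i = q i' := by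
  refine ⟨fun h i e i' hr ↦ h ⟨_, hr, rfl⟩, ?_⟩
  rintro h _ _ _ ⟨⟨i, e, i'⟩, hr, ⟨⟩⟩
  exact h hr

variable (E) in
theorem exists_orbit_representatives (q : Q → X) :
    ∃ (j : Q → Q) (t : Q → E), (∀ i, t i • q (j i) = q i) ∧
      ∀ ⦃i i'⦄ (e : E), e • q i = q i' → j i = j i' := by
  let s : Setoid Q := (orbitRel E X).comap q
  have rel_out (i : Q) : ∃ e : E, e • q (Quotient.out (s := s) ⟦i⟧) = q i :=
    orbitRel_apply.1 (s.symm (Quotient.mk_out (s := s) i))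
  choose t ht using rel_out
  refine ⟨fun i ↦ Quotient.out (s := s) ⟦i⟧, t, ht, fun i i' e h ↦ ?_⟩
  have : (⟦i⟧ : Quotient s) = ⟦i'⟧ := Quotient.sound (s.symm (orbitRel_apply.2 ⟨e, h⟩))
  simp only [this]

/-- The equivariant map from a disjoint union of coset spaces sending the base cosets to given
points. -/
def sigmaCosetMap {L : Q → Subgroup E} (q : Q → X) (hL : ∀ p, L p ≤ stabilizer E (q p)) :
    (Σ p, E ⧸ L p) →[E] X where
  toFun z := ofQuotientStabilizer E (q z.1) (quotientMapOfLE (hL z.1) z.2)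
  map_smul' e := by
    rintro ⟨p, z⟩
    induction z using QuotientGroup.induction_on with
    | H g => exact mul_smul e g (q p)

theorem exists_realization_in_cosets {R : Set (Q × E × Q)} (hR : R.Finite)
    (hq : Realizes R q) :
    ∃ L : Q → Subgroup E, (∀ p, (L p).FG) ∧ (∀ p, L p ≤ stabilizer E (q p)) ∧
      ∀ (L' : Q → Subgroup E) (hL' : ∀ p, L' p ≤ stabilizer E (q p)), (∀ p, L p ≤ L' p) →
        ∃ ω : Q → Σ p, E ⧸ L' p, Realizes R ω ∧ ∀ i, sigmaCosetMap q hL' (ω i) = q i := by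
  obtain ⟨j, t, ht, hj⟩ := exists_orbit_representatives E q
  -- An arrow becomes a loop at the representative of its orbit, which has to lie in the subgroup.
  let loop (r : Q × E × Q) : E := (t r.2.2)⁻¹ * r.2.1 * t r.1
  let loops (p : Q) : Set E := loop '' {r ∈ R | j r.1 = p}
  have loops_finite (p : Q) : (loops p).Finite := (hR.sep _).image _
  refine ⟨fun p ↦ closure (loops p), fun p ↦ (fg_iff _).2 ⟨_, rfl, loops_finite p⟩, fun p ↦ ?_, ?_⟩
  · rw [closure_le]
    rintro _ ⟨⟨i, e, i'⟩, ⟨hr, rfl⟩, rfl⟩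
    have he := hq hr
    simp only [loop, SetLike.mem_coe, mem_stabilizer_iff, mul_smul, ht, he]
    rw [inv_smul_eq_iff, hj e he, ht]
  · intro L' hL' hLL'
    let base (p : Q) : Σ p, E ⧸ L' p := ⟨p, (1 : E)⟩
    have smul_base {p : Q} {e : E} (he : e ∈ L' p) : e • base p = base p := by
      rw [← stabilizer_quotient (L' p)] at he
      exact congrArg (Sigma.mk p) he
    refine ⟨fun i ↦ t i • base (j i), fun i e i' hr ↦ ?_, fun i ↦ ?_⟩
    · have hloop : loop (i, e, i') ∈ L' (j i) := hLL' _ (subset_closure ⟨_, ⟨hr, rfl⟩, rfl⟩)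
      beta_reduce
      rw [← hj e (hq hr), ← inv_smul_eq_iff, smul_smul, smul_smul]
      exact smul_base hloop
    · rw [map_smul]
      exact (congrArg (t i • ·) (one_smul E _)).trans (ht i)

theorem exists_finite_map_closure_eq {K : Subgroup E} (π : E →* D) (hK : (K.map π).FG) :
    ∃ S : Set E, S.Finite ∧ S ⊆ K ∧ (closure S).map π = K.map π := by
  classical
  obtain ⟨S, hS⟩ := hK
  have hSK : (S : Set D) ⊆ π '' K := by
    rw [← coe_map, ← hS]
    exact subset_closure
  obtain ⟨S', hS'K, rfl⟩ := Finset.subset_set_image_iff.1 hSK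
  exact ⟨S', S'.finite_toSet, hS'K, by rw [MonoidHom.map_closure, ← Finset.coe_image, hS]⟩

theorem exists_finite_generated_of_smul_eq [Finite Q] (π : E →* D) (q : Q → X)
    (h : ∀ i, ((stabilizer E (q i)).map π).FG) :
    ∃ T : Set (Q × E × Q), T.Finite ∧ Realizes T q ∧
      ∀ ⦃i e i'⦄, e • q i = q i' → ∃ e', π e' = π e ∧ Generated T i e' i' := by
  choose S hS hSq hSπ using fun i ↦ exists_finite_map_closure_eq π (h i)
  have exists_link (p : Q × Q) : ∃ e : E, ∀ e' : E, e' • q p.1 = q p.2 → e • q p.1 = q p.2 := by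
    by_cases hp : ∃ e : E, e • q p.1 = q p.2
    · exact hp.imp fun _ he _ _ ↦ he
    · exact ⟨1, fun e' he' ↦ absurd ⟨e', he'⟩ hp⟩
  choose link hlink using exists_link
  let links : Set (Q × E × Q) := (fun p ↦ (p.1, link p, p.2)) '' {p | link p • q p.1 = q p.2}
  let T := (⋃ i, (fun e ↦ (i, e, i)) '' S i) ∪ links
  have loop_generated (i : Q) ⦃e : E⦄ (he : e ∈ closure (S i)) : Generated T i e i := by
    induction he using closure_induction with
    | mem e he => exact .of (.inl (Set.mem_iUnion.2 ⟨i, e, he, rfl⟩))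
    | one => exact .one i
    | mul _ _ _ _ ih ih' => exact .mul ih' ih
    | inv _ _ ih => exact .inv ih
  refine ⟨T, (Set.finite_iUnion fun i ↦ (hS i).image _).union ((Set.toFinite _).image _), ?_, ?_⟩
  · rintro i e i' (hr | ⟨p, hp, ⟨⟩⟩)
    · obtain ⟨_, _, he, ⟨⟩⟩ := Set.mem_iUnion.1 hr
      exact hSq i he
    · exact hp
  · intro i e i' he
    have hl := hlink (i, i') e he
    have hmem : (link (i, i'))⁻¹ * e ∈ stabilizer E (q i) := by
      rw [mem_stabilizer_iff, mul_smul, he, inv_smul_eq_iff, hl]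
    obtain ⟨d, hd, hde⟩ := (hSπ i).ge (mem_map_of_mem π hmem)
    exact ⟨link (i, i') * d, by simp [hde],
      .mul (loop_generated i hd) (.of (.inr ⟨(i, i'), hl, rfl⟩))⟩

end Arrows

section Products

variable {F A X : Type*} [Group F] [Group A] [MulAction (F × A) X] {L : Subgroup (F × A)}
  {N : Subgroup F} [N.Normal]

theorem inr_smul_inl_smul_eq_inl_smul_iff {a : A} {u v : F} {x y : X} :
    ((1 : F), a) • (u, (1 : A)) • x = (v, (1 : A)) • y ↔ (v⁻¹ * u, a) • x = y := by
  rw [← inv_smul_eq_iff, smul_smul, smul_smul]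
  simp

theorem comap_inl_sup_prod_bot (hL : L.comap (.inl F A) ≤ N) :
    (L ⊔ N.prod ⊥).comap (.inl F A) = N := by
  refine le_antisymm (fun w hw ↦ ?_) fun w hw ↦ mem_sup_right ⟨hw, one_mem _⟩
  obtain ⟨⟨u, a⟩, hu, ⟨n, b⟩, ⟨hn, hb⟩, h⟩ := mem_sup_of_normal_right.1 hw
  obtain rfl : b = 1 := hb
  obtain ⟨rfl, rfl⟩ : u * n = w ∧ a = 1 := by simpa using h
  exact mul_mem (hL hu) hn

theorem inl_smul_quotient_eq_iff (hL : L.comap (.inl F A) = N) (w : F) (x : (F × A) ⧸ L) :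
    (w, (1 : A)) • x = x ↔ w ∈ N := by
  induction x using QuotientGroup.induction_on with
  | H g =>
    have conj : g⁻¹ * ((w, 1) * g) = MonoidHom.inl F A (g.1⁻¹ * (w * g.1)) := by
      ext <;> simp
    rw [eq_comm, Quotient.smul_coe, QuotientGroup.eq, smul_eq_mul, conj, ← mem_comap, hL,
      (inferInstance : N.Normal).mem_comm_iff, mul_inv_cancel_right]

end Products

section Covers

variable {F : Type} {Γ P Q : Type u} {X : Type*} [Group F] [Group Γ] [Group P] [MulAction (F × P) X]

/-- Let `X` be an `F × P`-set and `j : Γ → P` a homomorphism. A cover of a family `q` of points of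
`X` is an `F × Γ`-set over `X` together with a lift of `q` that realizes the set `R` of arrows, such
that the `F`-stabilizer of every point is `N`. -/
structure Cover (j : Γ →* P) (R : Set (Q × (F × Γ) × Q)) (q : Q → X) (N : Subgroup F) where
  carrier : Type u
  [mulAction : MulAction (F × Γ) carrier]
  toHom : carrier →ₑ[Prod.map (id : F → F) j] X
  lift : Q → carrier
  toHom_lift : ∀ i, toHom (lift i) = q i
  realizes : Realizes R lift
  inl_smul_eq_iff : ∀ (w : F) (x : carrier), (w, (1 : Γ)) • x = x ↔ w ∈ N

attribute [instance] Cover.mulAction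

theorem exists_finite_nonempty_cover [Finite Q] (hΓ : Group.Coherent Γ) (j : Γ →* P)
    {R : Set (Q × (F × Γ) × Q)} (hR : R.Finite) {q : Q → X}
    (hq : Realizes (mapArrows (Prod.map id j) R) q) {N₀ : Subgroup F}
    (hN₀ : ∀ (w : F) (x : X), (w, (1 : P)) • x = x ↔ w ∈ N₀) :
    ∃ Y : Set F, Y.Finite ∧ Y ⊆ N₀ ∧
      ∀ N : Subgroup F, N.Normal → Y ⊆ N → N ≤ N₀ → Nonempty (Cover j R q N) := by
  let _ : MulAction (F × Γ) X := .compHom X ((MonoidHom.id F).prodMap j)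
  obtain ⟨L, hL, hLq, hlift⟩ := exists_realization_in_cosets hR
    ((realizes_mapArrows (φ := Prod.map id j)).1 hq)
  have inl_smul (w : F) (x : X) : (w, (1 : Γ)) • x = (w, (1 : P)) • x :=
    congrArg (fun p : P ↦ (w, p) • x) (map_one j)
  choose Y hY hYL hYN using fun p ↦ exists_finite_subset_comap_inl hΓ (hL p)
  refine ⟨⋃ p, Y p, Set.finite_iUnion hY, Set.iUnion_subset fun p w hw ↦ ?_, ?_⟩
  · exact (hN₀ w (q p)).1 ((inl_smul w _).symm.trans (hLq p (hYL p hw)))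
  · intro N hN hYN' hNN₀
    have comap_le (p : Q) : (L p).comap (.inl F Γ) ≤ N :=
      hYN p N hN ((Set.subset_iUnion Y p).trans hYN')
    have hL' (p : Q) : L p ⊔ N.prod ⊥ ≤ stabilizer (F × Γ) (q p) := by
      refine sup_le (hLq p) ?_
      rintro ⟨w, a⟩ ⟨hw, ha⟩
      obtain rfl : a = 1 := ha
      exact (inl_smul w _).trans ((hN₀ w _).2 (hNN₀ hw))
    obtain ⟨ω, hω, hωq⟩ := hlift _ hL' fun p ↦ le_sup_left
    let π := sigmaCosetMap q hL'
    exact ⟨{ carrier := Σ p, (F × Γ) ⧸ (L p ⊔ N.prod ⊥)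
             toHom := ⟨π, map_smul π⟩
             lift := ω
             toHom_lift := hωq
             realizes := hω
             inl_smul_eq_iff := by
               rintro w ⟨p, x⟩
               rw [Sigma.smul_mk, Sigma.mk.injEq, heq_eq_eq, eq_self, true_and]
               exact inl_smul_quotient_eq_iff (comap_inl_sup_prod_bot (comap_le p)) w x }⟩

namespace Cover

variable {j : Γ →* P} {R : Set (Q × (F × Γ) × Q)} {q : Q → X} {N : Subgroup F}

theorem eq_one_of_inr_smul_eq (K : Cover j R q N) (hj : Injective j)
    (hX : ∀ (p : P) (x : X), ((1 : F), p) • x = x → p = 1) (a : Γ) (x : K.carrier)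
    (h : ((1 : F), a) • x = x) : a = 1 := by
  have : ((1 : F), j a) • K.toHom x = K.toHom x :=
    (K.toHom.map_smul' (1, a) x).symm.trans (congrArg K.toHom h)
  exact hj ((hX _ _ this).trans (map_one j).symm)

theorem smul_lift_eq_iff {C : Type*} [Group C] (K : Cover j R q N) {f : C →* Γ}
    {T : Set (Q × (F × C) × Q)} (hTR : mapArrows (Prod.map id f) T ⊆ R)
    (hT : ∀ ⦃i i'⦄ (w : F) (c : C), (w, j (f c)) • q i = q i' → ∃ v, Generated T i (v, c) i')
    {i i' : Q} {w : F} {c : C} :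
    (w, f c) • K.lift i = K.lift i' ↔ ∃ v, Generated T i (v, c) i' ∧ v⁻¹ * w ∈ N := by
  let _ : MulAction (F × C) K.carrier := .compHom _ ((MonoidHom.id F).prodMap f)
  have hlift : Realizes T K.lift :=
    (realizes_mapArrows (φ := Prod.map id f)).1 (K.realizes.mono hTR)
  have smul_lift_eq {v : F} (hv : Generated T i (v, c) i') :
      (w, f c) • K.lift i = K.lift i' ↔ v⁻¹ * w ∈ N := by
    have : (v, f c) • K.lift i = K.lift i' := hlift.smul_eq hv
    rw [← this, ← inv_smul_eq_iff, smul_smul]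
    simp [K.inl_smul_eq_iff]
  refine ⟨fun h ↦ ?_, fun ⟨v, hv, hvw⟩ ↦ (smul_lift_eq hv).2 hvw⟩
  have hq : (w, j (f c)) • q i = q i' := by
    rw [← K.toHom_lift, ← K.toHom_lift, ← h]
    exact (K.toHom.map_smul' (w, f c) _).symm
  obtain ⟨v, hv⟩ := hT w c hq
  exact ⟨v, hv, (smul_lift_eq hv).1 h⟩

end Cover

end Covers

section Gluing

variable {A B C P X Y K Z : Type u} [Group A] [Group B] [Group C] [Group P]

theorem exists_equiv_prod_of_bijective_mk [MulAction C Y] [IsCancelSMul C Y] {b : Z → Y}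
    (hb : Bijective fun z ↦ (⟦b z⟧ : orbitRel.Quotient C Y)) :
    ∃ e : C × Z ≃ Y, ∀ c z, e (c, z) = c • b z := by
  refine ⟨.ofBijective (fun x ↦ x.1 • b x.2) ⟨?_, fun y ↦ ?_⟩, fun _ _ ↦ rfl⟩
  · rintro ⟨c, z⟩ ⟨c', z'⟩ (h : c • b z = c' • b z')
    obtain rfl : z = z' := hb.1 (Quotient.sound (orbitRel_apply.2 ⟨c⁻¹ * c', by
      beta_reduce; rw [mul_smul, ← h, inv_smul_smul]⟩))
    rw [IsCancelSMul.right_cancel _ _ _ h]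
  · obtain ⟨z, hz⟩ := hb.2 ⟦y⟧
    obtain ⟨c, hc⟩ := orbitRel_apply.1 (Quotient.exact hz.symm)
    exact ⟨(c, z), hc⟩

theorem exists_equiv_prod_sum [MulAction C Y] [IsCancelSMul C Y] {α : K → Y} {v : Z → Y}
    (hαv : Injective fun z ↦ (⟦Sum.elim α v z⟧ : orbitRel.Quotient C Y))
    (hYZ : #Y ≤ #Z) :
    ∃ e : C × (K ⊕ Z) ≃ Y, (∀ c z, e (c, z) = c • e (1, z)) ∧ ∀ k, e (1, .inl k) = α k := by
  classical
  obtain ⟨u⟩ := hYZ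
  let classOf (y : Y) : orbitRel.Quotient C Y := ⟦y⟧
  have hα : Injective (classOf ∘ α) := hαv.comp Sum.inl_injective
  let missed := (Set.range (classOf ∘ α))ᶜ
  let toMissed (z : Z) : missed := ⟨classOf (v z), fun ⟨k, hk⟩ ↦ Sum.inl_ne_inr (hαv hk)⟩
  have toMissed_injective : Injective toMissed := fun z z' h ↦
    Sum.inr_injective (hαv (congrArg Subtype.val h))
  obtain ⟨σ⟩ : Nonempty (Z ≃ missed) := Embedding.antisymm ⟨toMissed, toMissed_injective⟩
    ⟨fun o ↦ u o.1.out, u.injective.comp (Quotient.out_injective.comp Subtype.val_injective)⟩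
  let orbits : K ⊕ Z ≃ orbitRel.Quotient C Y :=
    ((Equiv.ofInjective _ hα).sumCongr σ).trans (Equiv.Set.sumCompl _)
  let rep : K ⊕ Z → Y := Sum.elim α fun z ↦ (σ z).1.out
  have mk_rep (z : K ⊕ Z) : classOf (rep z) = orbits z := by
    rcases z with k | z
    · rfl
    · exact Quotient.out_eq (σ z).1
  obtain ⟨e, he⟩ := exists_equiv_prod_of_bijective_mk (b := rep)
    ((funext mk_rep : classOf ∘ rep = orbits) ▸ orbits.bijective)
  exact ⟨e, fun c z ↦ by simp [he], fun k ↦ by simp [he, rep]⟩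

theorem exists_free_extension [MulAction A X] [IsCancelSMul A X] {f : C →* A} (hf : Injective f)
    {α : K → X} (hα : ∀ c k k', f c • α k = α k' → k = k') [Infinite Z] (hX : #X ≤ #Z)
    (hA : #A ≤ #Z) :
    ∃ (X' : Type u) (_ : MulAction A X') (ι : X →[A] X') (e : C × (K ⊕ Z) ≃ X'), Injective ι ∧
      (∀ c z, e (c, z) = f c • e (1, z)) ∧ ∀ k, e (1, .inl k) = ι (α k) := by
  let X' := X ⊕ Σ _ : Z, A
  have hX' : #X' ≤ #Z := by
    have hZ := aleph0_le_mk Z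
    simpa [X'] using add_le_of_le hZ hX (mul_le_of_le hZ le_rfl hA)
  have free (a : A) (x : X') (h : a • x = x) : a = 1 := by
    rcases x with x | ⟨z, b⟩
    · exact IsCancelSMul.eq_one_of_smul (Sum.inl_injective h)
    · simpa [X'] using h
  let _ : MulAction C X' := .compHom X' f
  have : IsCancelSMul C X' := isCancelSMul_iff_eq_one_of_smul_eq.2 fun c x h ↦
    hf ((free _ x h).trans (map_one f).symm)
  let base (z : Z) : X' := .inr ⟨z, 1⟩
  have orbits_distinct : Injective fun z ↦
      (⟦Sum.elim (Sum.inl ∘ α) base z⟧ : orbitRel.Quotient C X') := by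
    rintro z z' h
    obtain ⟨c, hc⟩ := orbitRel_apply.1 (Quotient.exact h.symm)
    have hc : f c • Sum.elim (Sum.inl ∘ α) base z = Sum.elim (Sum.inl ∘ α) base z' := hc
    rcases z with k | z <;> rcases z' with k' | z'
    · rw [hα c k k' (Sum.inl_injective hc)]
    · cases hc
    · cases hc
    · exact congrArg Sum.inr (Sigma.mk.inj_iff.1 (Sum.inr_injective hc)).1
  obtain ⟨e, he, heα⟩ := exists_equiv_prod_sum orbits_distinct hX'
  exact ⟨X', inferInstance, ⟨Sum.inl, fun _ _ ↦ rfl⟩, e, Sum.inl_injective, he, heα⟩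

/-- The group `P`, with the homomorphisms `jA` and `jB`, is the amalgamated free product of `A` and
`B` along `f : C → A` and `g : C → B`, i.e. their pushout in the category of groups. -/
structure IsAmalgamatedProduct (f : C →* A) (g : C →* B) (jA : A →* P) (jB : B →* P) : Prop where
  comm : jA.comp f = jB.comp g
  existsUnique_lift : ∀ (G : Type u) [Group G] (kA : A →* G) (kB : B →* G),
    kA.comp f = kB.comp g → ∃! h : P →* G, h.comp jA = kA ∧ h.comp jB = kB

namespace IsAmalgamatedProduct

variable {f : C →* A} {g : C →* B} {jA : A →* P} {jB : B →* P}

theorem symm (h : IsAmalgamatedProduct f g jA jB) : IsAmalgamatedProduct g f jB jA where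
  comm := h.comm.symm
  existsUnique_lift G _ kB kA hk := by
    simpa only [and_comm] using h.existsUnique_lift G kA kB hk.symm

theorem range_sup_range (h : IsAmalgamatedProduct f g jA jB) : jA.range ⊔ jB.range = ⊤ := by
  let M := jA.range ⊔ jB.range
  let kA : A →* M := jA.codRestrict M fun a ↦ mem_sup_left ⟨a, rfl⟩
  let kB : B →* M := jB.codRestrict M fun b ↦ mem_sup_right ⟨b, rfl⟩
  have hk : kA.comp f = kB.comp g := by
    ext c
    exact DFunLike.congr_fun h.comm c
  obtain ⟨r, ⟨hrA, hrB⟩, -⟩ := h.existsUnique_lift M kA kB hk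
  have hr : M.subtype.comp r = .id P := (h.existsUnique_lift P jA jB h.comm).unique
    ⟨by rw [MonoidHom.comp_assoc, hrA]; rfl, by rw [MonoidHom.comp_assoc, hrB]; rfl⟩ ⟨rfl, rfl⟩
  refine eq_top_iff.2 fun p _ ↦ ?_
  have hp : (r p : P) = p := DFunLike.congr_fun hr p
  exact hp ▸ (r p).2

theorem submonoidClosure_range_union_range (h : IsAmalgamatedProduct f g jA jB) :
    Submonoid.closure (jA.range ∪ jB.range : Set P) = ⊤ := by
  have := congrArg toSubmonoid ((sup_eq_closure _ _).symm.trans h.range_sup_range)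
  rwa [closure_toSubmonoid, Set.union_inv, inv_coe_set, inv_coe_set, Set.union_self] at this

theorem exists_mulAction_of_equiv (h : IsAmalgamatedProduct f g jA jB) [MulAction A X]
    [MulAction B Y] (e : X ≃ Y) (he : ∀ c x, e (f c • x) = g c • e x) :
    ∃ _ : MulAction P X, (∀ a (x : X), jA a • x = a • x) ∧
      ∀ b y, jB b • e.symm y = e.symm (b • y) := by
  let kB : B →* Equiv.Perm X := e.symm.permCongrHom.toMonoidHom.comp (toPermHom B Y)
  have hk : (toPermHom A X).comp f = kB.comp g := by
    ext c x
    simp [kB, ← he, Equiv.permCongrHom]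
  obtain ⟨ρ, ⟨hA, hB⟩, -⟩ := h.existsUnique_lift (Equiv.Perm X) (toPermHom A X) kB hk
  refine ⟨.compHom X ρ, fun a x ↦ ?_, fun b y ↦ ?_⟩
  · exact congrArg (fun σ : Equiv.Perm X ↦ σ x) (DFunLike.congr_fun hA a)
  · refine (congrArg (fun σ : Equiv.Perm X ↦ σ (e.symm y)) (DFunLike.congr_fun hB b)).trans ?_
    simp [kB, Equiv.permCongrHom]

theorem exists_glue (h : IsAmalgamatedProduct f g jA jB) (hf : Injective f) (hg : Injective g)
    [MulAction A X] [IsCancelSMul A X] [MulAction B Y] [IsCancelSMul B Y] {α : K → X} {β : K → Y}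
    (hαβ : ∀ c k k', f c • α k = α k' ↔ g c • β k = β k') :
    ∃ (Ω : Type u) (_ : MulAction P Ω) (ι : X →ₑ[jA] Ω) (κ : Y →ₑ[jB] Ω), Injective ι ∧
      ∀ k, ι (α k) = κ (β k) := by
  let _ : MulAction C X := .compHom X f
  obtain ⟨j, t, ht, hj⟩ := exists_orbit_representatives C α
  have distinct (c : C) (k k' : Set.range j) (hc : f c • α k = α k') : k = k' := by
    obtain ⟨⟨_, k, rfl⟩, ⟨_, k', rfl⟩⟩ := k, k'
    have idem (i : K) : j (j i) = j i := hj (t i) (ht i)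
    exact Subtype.ext (by simpa [idem] using hj c hc)
  -- After adding enough free orbits, `X` and `Y` have equally many `C`-orbits besides those to be
  -- identified, so the identification extends to a `C`-equivariant bijection.
  let Z := ULift.{u} ℕ ⊕ (X ⊕ A) ⊕ (Y ⊕ B)
  obtain ⟨X', _, ι, Φ, hι, hΦ, hΦα⟩ := exists_free_extension (Z := Z) hf distinct
    (mk_le_of_injective (Sum.inr_injective.comp (Sum.inl_injective.comp Sum.inl_injective)))
    (mk_le_of_injective (Sum.inr_injective.comp (Sum.inl_injective.comp Sum.inr_injective)))
  obtain ⟨Y', _, κ, Ψ, -, hΨ, hΨβ⟩ := exists_free_extension (Z := Z) hg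
    (fun c k k' hc ↦ distinct c k k' ((hαβ c k k').2 hc))
    (mk_le_of_injective (Sum.inr_injective.comp (Sum.inr_injective.comp Sum.inl_injective)))
    (mk_le_of_injective (Sum.inr_injective.comp (Sum.inr_injective.comp Sum.inr_injective)))
  let e : X' ≃ Y' := Φ.symm.trans Ψ
  have he (c : C) (x : X') : e (f c • x) = g c • e x := by
    obtain ⟨⟨d, z⟩, rfl⟩ := Φ.surjective x
    have hmul : f c • Φ (d, z) = Φ (c * d, z) := by rw [hΦ, hΦ (c * d), map_mul, mul_smul]
    simp [e, hmul, hΨ (c * d), hΨ d, mul_smul]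
  have heα (k : K) : e (ι (α k)) = κ (β k) := by
    let r : Set.range j := ⟨j k, k, rfl⟩
    have hα : f (t k) • α r = α k := ht k
    rw [← hα, map_smul, he, ← (hαβ _ _ _).1 hα, map_smul, ← hΦα, ← hΨβ]
    simp [e]
  obtain ⟨_, hA, hB⟩ := h.exists_mulAction_of_equiv e he
  exact ⟨X', inferInstance, ⟨ι, fun a x ↦ (map_smul ι a x).trans (hA a _).symm⟩,
    ⟨fun y ↦ e.symm (κ y), fun b y ↦ by rw [map_smul, hB]⟩, hι,
    fun k ↦ e.eq_symm_apply.2 (heα k)⟩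

theorem injective_left (h : IsAmalgamatedProduct f g jA jB) (hf : Injective f)
    (hg : Injective g) : Injective jA := by
  -- The regular `A`-set embeds into a `P`-set: there is nothing to identify.
  obtain ⟨Ω, _, ι, -, hι, -⟩ := h.exists_glue hf hg (X := A) (Y := B) (K := PEmpty)
    (α := PEmpty.elim) (β := PEmpty.elim) (fun _ k ↦ k.elim)
  refine (injective_iff_map_eq_one jA).2 fun a ha ↦ hι ?_
  simpa [ha] using map_smulₛₗ ι a 1

end IsAmalgamatedProduct

end Gluing

section Walks

variable {P : Type u} [Group P]

theorem exists_finite_walks {ι : Type*} [Finite ι] {S : Set P} (hS : Submonoid.closure S = ⊤)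
    (p : ι → P) :
    ∃ (Q : Type u) (_ : Finite Q) (o : Q) (t : ι → Q) (q : Q → P) (R : Set (Q × P × Q)),
      R.Finite ∧ (∀ ⦃i y i'⦄, (i, y, i') ∈ R → y ∈ S) ∧ q o = 1 ∧ Realizes R q ∧
        ∀ i, Generated R o (p i) (t i) := by
  choose w hwS hwp using fun i ↦ Submonoid.exists_list_of_mem_closure (hS ▸ Submonoid.mem_top (p i))
  let Q := {l : List P | l = [] ∨ ∃ i, l <:+ w i}
  have Q_finite : Q.Finite := by
    refine ((Set.finite_singleton []).union
      (Set.finite_iUnion fun i ↦ (w i).tails.finite_toSet)).subset ?_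
    rintro l (hl | ⟨i, hi⟩)
    · exact .inl hl
    · exact .inr (Set.mem_iUnion.2 ⟨i, (List.mem_tails l _).2 hi⟩)
  have : Finite Q := Q_finite
  let R : Set (Q × P × Q) := {r | r.2.2 = r.2.1 :: r.1.1}
  have R_finite : R.Finite := by
    refine .of_finite_image (f := fun r ↦ (r.1, r.2.2)) (Set.toFinite _) ?_
    rintro ⟨l, y, l'⟩ (h : l'.1 = y :: l) ⟨m, z, m'⟩ (h' : m'.1 = z :: m) ⟨⟩
    rw [(List.cons.inj (h.symm.trans h')).1]
  have generated (l : List P) (hl : l ∈ Q) : Generated R ⟨[], .inl rfl⟩ l.prod ⟨l, hl⟩ := by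
    induction l with
    | nil => exact .one _
    | cons y l ih =>
      obtain ⟨i, hi⟩ := hl.resolve_left (List.cons_ne_nil y l)
      exact .mul (ih (.inr ⟨i, (List.suffix_cons y l).trans hi⟩)) (.of rfl)
  refine ⟨Q, Q_finite, ⟨[], .inl rfl⟩, fun i ↦ ⟨w i, .inr ⟨i, List.suffix_rfl⟩⟩,
    fun l ↦ l.1.prod, R, R_finite, ?_, List.prod_nil, ?_, fun i ↦ hwp i ▸ generated _ _⟩
  · rintro l y l' (h : l'.1 = y :: l)
    obtain ⟨i, hi⟩ := l'.2.resolve_left (h ▸ List.cons_ne_nil y l)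
    exact hwS i y (hi.mem (h ▸ List.mem_cons_self))
  · rintro l y l' (h : l'.1 = y :: l)
    simp [h]

end Walks

section GraphCosets

variable {F P : Type*} [Group F] [Group P] (ψ : F →* P)

theorem inl_smul_graph_coset_eq_iff (w : F) (x : (F × P) ⧸ ψ.graph) :
    (w, (1 : P)) • x = x ↔ w ∈ ψ.ker :=
  inl_smul_quotient_eq_iff (by ext w; simp [MonoidHom.mem_graph, eq_comm]) w x

theorem eq_one_of_inr_smul_graph_coset_eq (p : P) (x : (F × P) ⧸ ψ.graph)
    (h : ((1 : F), p) • x = x) : p = 1 := by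
  induction x using QuotientGroup.induction_on with
  | H g =>
    rw [eq_comm, Quotient.smul_coe, QuotientGroup.eq, MonoidHom.mem_graph] at h
    simpa [inv_mul_eq_one, eq_comm] using h

theorem inl_inv_smul_mk_graph (s : F) :
    (s⁻¹, (1 : P)) • (QuotientGroup.mk 1 : (F × P) ⧸ ψ.graph) = QuotientGroup.mk (1, ψ s) := by
  rw [Quotient.smul_coe, QuotientGroup.eq, MonoidHom.mem_graph]
  simp

theorem realizes_mk_graph {Q : Type*} {R : Set (Q × P × Q)} {r : Q → P} (hr : Realizes R r) :
    Realizes (mapArrows (MonoidHom.inr F P) R)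
      fun i ↦ (QuotientGroup.mk (1, r i) : (F × P) ⧸ ψ.graph) := by
  refine realizes_mapArrows.2 fun i p i' hp ↦ ?_
  rw [Quotient.smul_coe, ← hr hp]
  simp

theorem fg_map_snd_comap_stabilizer [Group.FG F] {C : Type*} [Group C] {k : C →* P}
    (hk : ∀ H : Subgroup P, H.FG → (H.comap k).FG) (x : (F × P) ⧸ ψ.graph) :
    (((stabilizer (F × P) x).comap ((MonoidHom.id F).prodMap k)).map (.snd F C)).FG := by
  induction x using QuotientGroup.induction_on with
  | H g =>
    obtain ⟨v, p⟩ := g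
    let H := ((MulAut.conj p).toMonoidHom.comp ψ).range
    have hH : H.FG := Group.fg_iff_subgroup_fg _ |>.1 inferInstance
    convert hk H hH
    ext c
    have smul_eq_iff (w : F) : (w, k c) • (QuotientGroup.mk (v, p) : (F × P) ⧸ ψ.graph) =
        QuotientGroup.mk (v, p) ↔ p * ψ (v⁻¹ * w * v) * p⁻¹ = k c := by
      rw [eq_comm, Quotient.smul_coe, QuotientGroup.eq, MonoidHom.mem_graph]
      simp [mul_assoc, eq_inv_mul_iff_mul_eq, ← eq_mul_inv_iff_mul_eq]
    constructor
    · rintro ⟨⟨w, c⟩, hw, rfl⟩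
      exact ⟨_, (smul_eq_iff w).1 hw⟩
    · rintro ⟨u, hu⟩
      refine ⟨(v * u * v⁻¹, c), (smul_eq_iff _).2 ?_, rfl⟩
      simpa [mul_assoc] using hu

theorem exists_finite_generated_of_smul_graph_coset_eq [Group.FG F] {C Q : Type*} [Group C]
    [Finite Q] {k : C →* P} (hk : ∀ H : Subgroup P, H.FG → (H.comap k).FG)
    (q : Q → (F × P) ⧸ ψ.graph) :
    ∃ T : Set (Q × (F × C) × Q), T.Finite ∧ Realizes (mapArrows (Prod.map id k) T) q ∧
      ∀ ⦃i i'⦄ (w : F) (c : C), (w, k c) • q i = q i' → ∃ v, Generated T i (v, c) i' := by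
  let _ : MulAction (F × C) ((F × P) ⧸ ψ.graph) := .compHom _ ((MonoidHom.id F).prodMap k)
  obtain ⟨T, hT, hTq, hgen⟩ := exists_finite_generated_of_smul_eq (.snd F C) q fun i ↦
    fg_map_snd_comap_stabilizer ψ hk (q i)
  refine ⟨T, hT, (realizes_mapArrows (φ := Prod.map id k)).2 hTq, fun i i' w c hwc ↦ ?_⟩
  obtain ⟨⟨v, c⟩, rfl, hv⟩ := hgen (e := (w, c)) hwc
  exact ⟨v, hv⟩

end GraphCosets

section Kernel

variable {A B C P Q : Type u} {F : Type} [Group A] [Group B] [Group C] [Group P] [Group F]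
  {f : C →* A} {g : C →* B} {jA : A →* P} {jB : B →* P}

/-- The arrows to be realized in a cover over `A`: those of `T`, transported along `f : C → A`, and
those of `R` whose label comes from `A`. -/
def sideArrows (f : C →* A) (j : A →* P) (T : Set (Q × (F × C) × Q)) (R : Set (Q × P × Q)) :
    Set (Q × (F × A) × Q) :=
  mapArrows (Prod.map id f) T ∪ mapArrows (MonoidHom.inr F A) (Prod.map id (Prod.map j id) ⁻¹' R)

variable {X : Type*} [MulAction (F × P) X] {q : Q → X} {T : Set (Q × (F × C) × Q)}
  {R : Set (Q × P × Q)} {N : Subgroup F}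

theorem finite_sideArrows (hj : Injective jA) (hT : T.Finite) (hR : R.Finite) :
    (sideArrows f jA T R).Finite :=
  (hT.image _).union <| .image _ <| hR.preimage
    (injective_id.prodMap (hj.prodMap injective_id)).injOn

theorem realizes_sideArrows (hT : Realizes (mapArrows (Prod.map id (jA.comp f)) T) q)
    (hR : Realizes (mapArrows (MonoidHom.inr F P) R) q) :
    Realizes (mapArrows (Prod.map id jA) (sideArrows f jA T R)) q := by
  rw [realizes_mapArrows] at hT hR ⊢
  rintro i e i' (⟨⟨i, e, i'⟩, he, ⟨⟩⟩ | ⟨⟨i, a, i'⟩, ha, ⟨⟩⟩)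
  · exact hT he
  · exact hR ha

namespace IsAmalgamatedProduct

theorem exists_mulAction_of_covers (h : IsAmalgamatedProduct f g jA jB) (hf : Injective f)
    (hg : Injective g) (hX : ∀ (p : P) (x : X), ((1 : F), p) • x = x → p = 1)
    {RA : Set (Q × (F × A) × Q)} {RB : Set (Q × (F × B) × Q)} (KA : Cover jA RA q N)
    (KB : Cover jB RB q N)
    (hAB : ∀ ⦃w : F⦄ ⦃c i i'⦄,
      (w, f c) • KA.lift i = KA.lift i' ↔ (w, g c) • KB.lift i = KB.lift i') :
    ∃ (Ω : Type u) (_ : MulAction P Ω) (ξ : F → Q → Ω),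
      (∀ ⦃i i' a⦄, ((1 : F), a) • KA.lift i = KA.lift i' → ∀ u, jA a • ξ u i = ξ u i') ∧
      (∀ ⦃i i' b⦄, ((1 : F), b) • KB.lift i = KB.lift i' → ∀ u, jB b • ξ u i = ξ u i') ∧
      ∀ {u v i i'}, ξ u i = ξ v i' ↔ (v⁻¹ * u, (1 : A)) • KA.lift i = KA.lift i' := by
  let _ : MulAction A KA.carrier := .compHom _ (MonoidHom.inr F A)
  let _ : MulAction B KB.carrier := .compHom _ (MonoidHom.inr F B)
  have : IsCancelSMul A KA.carrier := isCancelSMul_iff_eq_one_of_smul_eq.2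
    (KA.eq_one_of_inr_smul_eq (h.injective_left hf hg) hX)
  have : IsCancelSMul B KB.carrier := isCancelSMul_iff_eq_one_of_smul_eq.2
    (KB.eq_one_of_inr_smul_eq (h.symm.injective_left hg hf) hX)
  let α (k : F × Q) : KA.carrier := (k.1, (1 : A)) • KA.lift k.2
  let β (k : F × Q) : KB.carrier := (k.1, (1 : B)) • KB.lift k.2
  have smul_α {a : A} {u v : F} {i i' : Q} :
      a • α (u, i) = α (v, i') ↔ (v⁻¹ * u, a) • KA.lift i = KA.lift i' :=
    inr_smul_inl_smul_eq_inl_smul_iff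
  have smul_β {b : B} {u v : F} {i i' : Q} :
      b • β (u, i) = β (v, i') ↔ (v⁻¹ * u, b) • KB.lift i = KB.lift i' :=
    inr_smul_inl_smul_eq_inl_smul_iff
  obtain ⟨Ω, _, ι, κ, hι, hικ⟩ := h.exists_glue hf hg (α := α) (β := β)
    fun c k k' ↦ smul_α.trans (hAB.trans smul_β.symm)
  refine ⟨Ω, inferInstance, fun u i ↦ ι (α (u, i)), fun i i' a ha u ↦ ?_, fun i i' b hb u ↦ ?_,
    fun {u v i i'} ↦ ?_⟩
  · beta_reduce
    rw [← map_smulₛₗ, smul_α.2 (by rwa [inv_mul_cancel])]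
  · beta_reduce
    rw [hικ, hικ, ← map_smulₛₗ, smul_β.2 (by rwa [inv_mul_cancel])]
  · rw [hι.eq_iff, ← smul_α, one_smul]

theorem ker_le_of_covers (h : IsAmalgamatedProduct f g jA jB) (hf : Injective f)
    (hg : Injective g) (hX : ∀ (p : P) (x : X), ((1 : F), p) • x = x → p = 1)
    (KA : Cover jA (sideArrows f jA T R) q N) (KB : Cover jB (sideArrows g jB T R) q N)
    (hT : ∀ ⦃i i'⦄ (w : F) (c : C), (w, jA (f c)) • q i = q i' → ∃ v, Generated T i (v, c) i')
    (hR : ∀ ⦃i p i'⦄, (i, p, i') ∈ R → p ∈ (jA.range ∪ jB.range : Set P)) {ψ : F →* P}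
    {S : Set F} (hS : closure S = ⊤) {o : Q}
    (hψ : ∀ s ∈ S, ∃ i, (o, (s⁻¹, 1), i) ∈ T ∧ Generated R o (ψ s) i) : ψ.ker ≤ N := by
  have hT' : ∀ ⦃i i'⦄ (w : F) (c : C), (w, jB (g c)) • q i = q i' →
      ∃ v, Generated T i (v, c) i' := by
    simpa only [← MonoidHom.comp_apply, h.comm] using hT
  obtain ⟨Ω, _, ξ, hξA, hξB, hξ⟩ := h.exists_mulAction_of_covers hf hg hX KA KB fun _ _ _ _ ↦
    (KA.smul_lift_eq_iff Set.subset_union_left hT).trans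
      (KB.smul_lift_eq_iff Set.subset_union_left hT').symm
  have realizes_R (u : F) : Realizes R (ξ u) := by
    intro i p i' hr
    rcases hR hr with ⟨a, rfl⟩ | ⟨b, rfl⟩
    · exact hξA (KA.realizes (.inr ⟨(i, a, i'), hr, rfl⟩)) u
    · exact hξB (KB.realizes (.inr ⟨(i, b, i'), hr, rfl⟩)) u
  have smul_ξ (w : F) : ∀ u, ψ w • ξ u o = ξ (u * w⁻¹) o := by
    induction (hS ▸ mem_top w : w ∈ closure S) using closure_induction with
    | mem s hs =>
      intro u
      obtain ⟨i, hi, hi'⟩ := hψ s hs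
      rw [(realizes_R u).smul_eq hi', eq_comm, hξ]
      simpa using KA.realizes (.inl ⟨_, hi, rfl⟩)
    | one => simp
    | mul w w' _ _ ih ih' => simp [mul_smul, ih, ih', mul_assoc]
    | inv w _ ih => simp [inv_smul_eq_iff, ih]
  intro w hw
  have hwξ := smul_ξ w 1
  rw [MonoidHom.mem_ker.1 hw, one_smul, hξ] at hwξ
  simpa [KA.inl_smul_eq_iff] using hwξ

theorem isFinitelyNormallyGenerated_ker (h : IsAmalgamatedProduct f g jA jB) (hf : Injective f)
    (hg : Injective g) (hA : Group.Coherent A) (hB : Group.Coherent B)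
    (hC : ∀ H : Subgroup P, H.FG → (H.comap (jA.comp f)).FG) [Group.FG F] (ψ : F →* P) :
    ψ.ker.IsFinitelyNormallyGenerated := by
  obtain ⟨S, hS, hSfin⟩ := Group.fg_iff.1 ‹Group.FG F›
  have := hSfin.to_subtype
  obtain ⟨Q, _, o, t, r, R, hR, hRrange, hro, hRr, hRt⟩ :=
    exists_finite_walks h.submonoidClosure_range_union_range fun s : S ↦ ψ s
  let q (i : Q) : (F × P) ⧸ ψ.graph := QuotientGroup.mk (1, r i)
  obtain ⟨T₀, hT₀, hT₀q, hT₀gen⟩ := exists_finite_generated_of_smul_graph_coset_eq ψ hC q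
  let T := T₀ ∪ Set.range fun s : S ↦ (o, ((s : F)⁻¹, 1), t s)
  have hT : T.Finite := hT₀.union (Set.finite_range _)
  have hTq : Realizes (mapArrows (Prod.map id (jA.comp f)) T) q := by
    rw [realizes_mapArrows] at hT₀q ⊢
    rintro i e i' (he | ⟨s, ⟨⟩⟩)
    · exact hT₀q he
    · have hrt : r (t s) = ψ s := by simpa [hro] using (hRr.smul_eq (hRt s)).symm
      simpa [q, hro, hrt] using inl_inv_smul_mk_graph ψ (s : F)
  have hRq := realizes_mk_graph ψ hRr
  obtain ⟨YA, hYA, hYAker, coverA⟩ := exists_finite_nonempty_cover hA jA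
    (finite_sideArrows (h.injective_left hf hg) hT hR) (realizes_sideArrows hTq hRq)
    (inl_smul_graph_coset_eq_iff ψ)
  obtain ⟨YB, hYB, hYBker, coverB⟩ := exists_finite_nonempty_cover hB jB
    (finite_sideArrows (h.symm.injective_left hg hf) hT hR) (realizes_sideArrows (h.comm ▸ hTq) hRq)
    (inl_smul_graph_coset_eq_iff ψ)
  have le_ker : normalClosure (YA ∪ YB) ≤ ψ.ker :=
    normalClosure_le_normal (Set.union_subset hYAker hYBker)
  obtain ⟨KA⟩ := coverA _ inferInstance (Set.subset_union_left.trans subset_normalClosure) le_ker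
  obtain ⟨KB⟩ := coverB _ inferInstance (Set.subset_union_right.trans subset_normalClosure) le_ker
  refine ⟨YA ∪ YB, hYA.union hYB, le_antisymm le_ker ?_⟩
  exact h.ker_le_of_covers hf hg (eq_one_of_inr_smul_graph_coset_eq ψ) KA KB
    (fun i i' w c hwc ↦ (hT₀gen w c hwc).imp fun _ ↦ .mono Set.subset_union_left) hRrange hS
    fun s hs ↦ ⟨t ⟨s, hs⟩, .inr ⟨⟨s, hs⟩, rfl⟩, hRt ⟨s, hs⟩⟩

end IsAmalgamatedProduct

end Kernel

theorem coherent_amalgamatedProduct_and_coherent_freeProduct_general {A B C P : Type u} [Group A]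
    [Group B] [Group C] [Group P] {f : C →* A} {g : C →* B} {jA : A →* P} {jB : B →* P}
    (h : IsAmalgamatedProduct f g jA jB) (hf : Injective f) (hg : Injective g)
    (hA : Group.Coherent A) (hB : Group.Coherent B)
    (hC : ∀ H : Subgroup P, H.FG → (H.comap (jA.comp f)).FG) : Group.Coherent P :=
  coherent_of_isFinitelyNormallyGenerated_ker fun _ _ ψ ↦
    h.isFinitelyNormallyGenerated_ker hf hg hA hB hC ψ

theorem isAmalgamatedProduct_coprod (A B : Type u) [Group A] [Group B] :
    IsAmalgamatedProduct (1 : PUnit.{u + 1} →* A) (1 : PUnit.{u + 1} →* B)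
      (Monoid.Coprod.inl : A →* Monoid.Coprod A B) Monoid.Coprod.inr where
  comm := by rw [MonoidHom.comp_one, MonoidHom.comp_one]
  existsUnique_lift _ _ kA kB _ :=
    ⟨Monoid.Coprod.lift kA kB, ⟨by simp, by simp⟩, fun _ hk ↦
      Monoid.Coprod.hom_ext (by simpa using hk.1) (by simpa using hk.2)⟩

/-- If `A ∗_C B` is an amalgamated free product (that is, the pushout of two
injective group homomorphisms `C → A` and `C → B`) with `A` and `B` coherent and `C` slender,
then `A ∗_C B` is coherent.  In particular, the free product of two coherent groups is
coherent. -/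
theorem coherent_amalgamatedProduct_and_coherent_freeProduct :
    (∀ (A B C P : Type) [Group A] [Group B] [Group C] [Group P]
      (f : C →* A) (g : C →* B), Function.Injective f → Function.Injective g →
      ∀ (jA : A →* P) (jB : B →* P), jA.comp f = jB.comp g →
      -- `P` (together with `jA`, `jB`) is the pushout `A ∗_C B` of `f` and `g`:
      (∀ (Q : Type) [Group Q] (kA : A →* Q) (kB : B →* Q), kA.comp f = kB.comp g →
        ∃! h : P →* Q, h.comp jA = kA ∧ h.comp jB = kB) →
      Group.Coherent A → Group.Coherent B → Group.Slender C → Group.Coherent P) ∧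
    (∀ (A B : Type) [Group A] [Group B],
      Group.Coherent A → Group.Coherent B → Group.Coherent (Monoid.Coprod A B)) :=
  ⟨fun _ _ _ _ _ _ _ _ _ _ hf hg _ _ hcomm hlift hA hB hC ↦
    coherent_amalgamatedProduct_and_coherent_freeProduct_general ⟨hcomm, hlift⟩ hf hg hA hB
      fun _ _ ↦ hC _,
    fun A B _ _ hA hB ↦
      coherent_amalgamatedProduct_and_coherent_freeProduct_general (isAmalgamatedProduct_coprod A B)
        (injective_of_subsingleton _) (injective_of_subsingleton _) hA hB
        fun _ _ ↦ ⟨∅, Subsingleton.elim _ _⟩⟩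
end
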